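/- arXiv:2305.16536 — 3 statements merged into one kernel-verified Lean document; each statement's English description precedes it below -/
import Mathlib

section
/- (Deterministic core of Theorem 4.4: the minimum-norm global minimizer of the supervised contrastive loss exhibits class collapse.) In the structured contrastive dataset with μ = 0 and p ≥ 3, every minimum-norm global minimizer of L_SCL — that is, every W** ∈ ℝ^{p×D} minimizing the Frobenius norm ‖W‖_F among all global minimizers W of L_SCL — satisfies W** v_2 = 0; hence the subclass feature v_2 is annihilated by the learned linear map. -/
open Matrix

/-- The contrastive trace loss `Tr(-2 WᵀW P + WᵀW M WᵀW M)`. -/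
noncomputable def CLTraceLoss {p D : ℕ} (P M : Matrix (Fin D) (Fin D) ℝ)
    (W : Matrix (Fin p) (Fin D) ℝ) : ℝ :=
  Matrix.trace ((-2 : ℝ) • (Wᵀ * W * P) + Wᵀ * W * M * (Wᵀ * W) * M)

theorem aux_trace_one {p D : ℕ} (W : Matrix (Fin p) (Fin D) ℝ) (a b : Fin D → ℝ) :
    Matrix.trace (Wᵀ * W * Matrix.vecMulVec a b) = (W *ᵥ a) ⬝ᵥ (W *ᵥ b) := by
  rw [Matrix.mul_vecMulVec, Matrix.trace_vecMulVec, ← Matrix.mulVec_mulVec,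
    Matrix.mulVec_transpose, ← Matrix.dotProduct_mulVec]

theorem aux_trace_two {p D : ℕ} (W : Matrix (Fin p) (Fin D) ℝ) (a b : Fin D → ℝ) :
    Matrix.trace (Wᵀ * W * Matrix.vecMulVec a a * (Wᵀ * W) * Matrix.vecMulVec b b)
      = ((W *ᵥ a) ⬝ᵥ (W *ᵥ b)) ^ 2 := by
  have h : ∀ c d : Fin D → ℝ, c ⬝ᵥ ((Wᵀ * W) *ᵥ d) = (W *ᵥ c) ⬝ᵥ (W *ᵥ d) := by
    intro c d
    rw [← Matrix.mulVec_mulVec, Matrix.dotProduct_mulVec, Matrix.vecMul_transpose]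
  rw [Matrix.mul_assoc (Wᵀ * W * Matrix.vecMulVec a a), Matrix.mul_vecMulVec,
    Matrix.mul_vecMulVec, Matrix.vecMulVec_mul_vecMulVec, h]
  rw [Matrix.trace_vecMulVec, dotProduct_smul, dotProduct_comm ((Wᵀ * W) *ᵥ a) b, h,
    dotProduct_comm (W *ᵥ b), smul_eq_mul]
  ring

theorem aux_loss {p D N : ℕ} (x : Fin N → Fin D → ℝ) (y : Fin N → ℝ)
    (M Mp : Matrix (Fin D) (Fin D) ℝ) (c : ℝ)
    (hM : M = c • ∑ i, Matrix.vecMulVec (x i) (x i))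
    (hMp : Mp = c ^ 2 • ∑ i, ∑ j, (1 + y i * y j) • Matrix.vecMulVec (x i) (x j))
    (W : Matrix (Fin p) (Fin D) ℝ) :
    CLTraceLoss Mp M W = c ^ 2 * (∑ i, ∑ j,
      (((W *ᵥ x i) ⬝ᵥ (W *ᵥ x j) - (1 + y i * y j)) ^ 2 - (1 + y i * y j) ^ 2)) := by
  unfold CLTraceLoss
  have h1 : Matrix.trace (Wᵀ * W * Mp)
      = c ^ 2 * ∑ i, ∑ j, (1 + y i * y j) * ((W *ᵥ x i) ⬝ᵥ (W *ᵥ x j)) := by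
    rw [hMp]
    simp only [Matrix.mul_smul, Matrix.trace_smul, Matrix.mul_sum, Matrix.trace_sum,
      aux_trace_one, smul_eq_mul]
  have h2 : Matrix.trace (Wᵀ * W * M * (Wᵀ * W) * M)
      = c ^ 2 * ∑ i, ∑ j, ((W *ᵥ x i) ⬝ᵥ (W *ᵥ x j)) ^ 2 := by
    rw [hM]
    simp only [Matrix.mul_smul, Matrix.smul_mul, Matrix.trace_smul, Matrix.mul_sum,
      Matrix.sum_mul, Matrix.trace_sum, aux_trace_two, smul_eq_mul]
    rw [Finset.sum_comm]
    simp only [Finset.mul_sum]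
    refine Finset.sum_congr rfl fun i _ => Finset.sum_congr rfl fun j _ => ?_
    ring
  rw [Matrix.trace_add, Matrix.trace_smul, h1, h2, smul_eq_mul]
  simp only [Finset.mul_sum, ← Finset.sum_add_distrib]
  refine Finset.sum_congr rfl fun i _ => Finset.sum_congr rfl fun j _ => ?_
  ring

theorem aux_Mp {D N : ℕ} (x : Fin N → Fin D → ℝ) (y : Fin N → ℝ)
    (hy : ∀ i, y i = 1 ∨ y i = -1) (c : ℝ)
    (xbar : ℝ → Fin D → ℝ) (Mp : Matrix (Fin D) (Fin D) ℝ)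
    (hxbar : ∀ ε, xbar ε = (2 * c) • ∑ i, Set.indicator {j : Fin N | y j = ε} x i)
    (hMp : Mp = (2 : ℝ)⁻¹ • (Matrix.vecMulVec (xbar 1) (xbar 1)
      + Matrix.vecMulVec (xbar (-1)) (xbar (-1)))) :
    Mp = c ^ 2 • ∑ i, ∑ j, (1 + y i * y j) • Matrix.vecMulVec (x i) (x j) := by
  have hb : ∀ ε : ℝ, (ε = 1 ∨ ε = -1) → ∀ t, xbar ε t = c * ∑ i, (1 + ε * y i) * x i t := by
    intro ε hε t
    rw [hxbar, Pi.smul_apply, Finset.sum_apply, smul_eq_mul, Finset.mul_sum, Finset.mul_sum]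
    refine Finset.sum_congr rfl fun i _ => ?_
    by_cases h : y i = ε
    · rw [Set.indicator_of_mem (by exact h), h]
      rcases hε with h | h <;> subst h <;> ring
    · rw [Set.indicator_of_notMem (by exact h)]
      have : 1 + ε * y i = 0 := by
        rcases hε with h' | h' <;> rcases hy i with h2 | h2 <;> simp_all
      rw [this]; simp
  ext s t
  rw [hMp]
  simp only [Matrix.smul_apply, Matrix.add_apply, Matrix.sum_apply, Matrix.vecMulVec_apply,
    smul_eq_mul, hb 1 (Or.inl rfl), hb (-1) (Or.inr rfl)]
  have : ∀ ε : ℝ, (c * ∑ i, (1 + ε * y i) * x i s) * (c * ∑ i, (1 + ε * y i) * x i t)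
      = c ^ 2 * ∑ i, ∑ j, ((1 + ε * y i) * x i s) * ((1 + ε * y j) * x j t) := by
    intro ε
    rw [← Finset.sum_mul_sum]; ring
  rw [this, this]
  simp only [Finset.mul_sum, ← Finset.sum_add_distrib]
  refine Finset.sum_congr rfl fun i _ => Finset.sum_congr rfl fun j _ => ?_
  ring

theorem aux_balance {N : ℕ} (T K : ℕ) (y ysub ρ : Fin N → ℝ) (κ : Fin N → ℕ)
    (hy : ∀ i, y i = 1 ∨ y i = -1)
    (hysub : ∀ i, ysub i = 1 ∨ ysub i = -1)
    (hρ : ∀ i, ρ i = 1 ∨ ρ i = -1)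
    (hκ : ∀ i, 3 ≤ κ i ∧ κ i ≤ K)
    (hbal : ∀ (a b r : ℝ) (c : ℕ), (a = 1 ∨ a = -1) → (b = 1 ∨ b = -1) →
      (r = 1 ∨ r = -1) → 3 ≤ c → c ≤ K →
      Set.ncard {i : Fin N | y i = a ∧ ysub i = b ∧ κ i = c ∧ ρ i = r} = T)
    (g : ℝ → ℕ → ℝ → ℝ) : ∑ i, ysub i * g (y i) (κ i) (ρ i) = 0 := by
  classical
  let f : Fin N → ℝ × ℕ × ℝ := fun i => (y i, κ i, ρ i)
  rw [← Finset.sum_fiberwise_of_maps_to (s := Finset.univ) (t := Finset.univ.image f) (g := f)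
    (fun i hi => Finset.mem_image_of_mem f hi)]
  refine Finset.sum_eq_zero fun q hq => ?_
  obtain ⟨k, -, rfl⟩ := Finset.mem_image.1 hq
  have e1 : ∀ i ∈ Finset.univ.filter (fun i => f i = f k),
      ysub i * g (y i) (κ i) (ρ i) = ((if ysub i = 1 then (1 : ℝ) else 0)
        - (if ysub i = -1 then (1 : ℝ) else 0)) * g (y k) (κ k) (ρ k) := by
    intro i hi
    have hi' : f i = f k := (Finset.mem_filter.1 hi).2
    simp only [f, Prod.mk.injEq] at hi'
    obtain ⟨h1, h2, h3⟩ := hi'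
    rw [h1, h2, h3]
    congr 1
    rcases hysub i with h | h <;> rw [h] <;> norm_num
  rw [Finset.sum_congr rfl e1, ← Finset.sum_mul, Finset.sum_sub_distrib]
  have e2 : ∀ b : ℝ, (b = 1 ∨ b = -1) →
      ∑ i ∈ Finset.univ.filter (fun i => f i = f k), (if ysub i = b then (1 : ℝ) else 0) = T := by
    intro b hb
    rw [Finset.sum_boole, ← hbal (y k) b (ρ k) (κ k) (hy k) hb (hρ k) (hκ k).1 (hκ k).2,
      Set.ncard_eq_toFinset_card']
    congr 2
    ext i
    simp only [f, Finset.mem_filter, Finset.mem_univ, true_and, Prod.mk.injEq, Set.mem_toFinset,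
      Set.mem_ofPred_eq]
    tauto
  rw [e2 1 (Or.inl rfl), e2 (-1) (Or.inr rfl)]
  simp

theorem aux_minnorm {p D : ℕ} (W : Matrix (Fin p) (Fin D) ℝ) (α : Fin D → ℝ)
    (h : ∀ s : ℝ, ∑ i, ∑ j, (W i j) ^ 2
      ≤ ∑ i, ∑ j, ((W - s • Matrix.vecMulVec (W *ᵥ α) α) i j) ^ 2) : W *ᵥ α = 0 := by
  set u := W *ᵥ α with hu
  have key : ∀ s : ℝ, ∑ i, ∑ j, ((W - s • Matrix.vecMulVec u α) i j) ^ 2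
      = ∑ i, ∑ j, (W i j) ^ 2 - 2 * s * (u ⬝ᵥ u) + s ^ 2 * ((u ⬝ᵥ u) * (α ⬝ᵥ α)) := by
    intro s
    have h1 : u ⬝ᵥ u = ∑ i, ∑ j, u i * (W i j * α j) := by
      conv_lhs => rw [dotProduct]
      refine Finset.sum_congr rfl fun i _ => ?_
      rw [← Finset.mul_sum]
      rfl
    have h2 : (u ⬝ᵥ u) * (α ⬝ᵥ α) = ∑ i, ∑ j, (u i * u i) * (α j * α j) := by
      rw [dotProduct, dotProduct, Finset.sum_mul_sum]
    rw [h2, h1]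
    simp only [Finset.mul_sum, ← Finset.sum_add_distrib, ← Finset.sum_sub_distrib]
    refine Finset.sum_congr rfl fun i _ => Finset.sum_congr rfl fun j _ => ?_
    simp only [Matrix.sub_apply, Matrix.smul_apply, Matrix.vecMulVec_apply, smul_eq_mul]
    ring
  have hA : 0 ≤ α ⬝ᵥ α := by
    rw [dotProduct]; exact Finset.sum_nonneg fun i _ => mul_self_nonneg _
  have hU : 0 ≤ u ⬝ᵥ u := by
    rw [dotProduct]; exact Finset.sum_nonneg fun i _ => mul_self_nonneg _
  have h3 := h (1 + α ⬝ᵥ α)⁻¹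
  rw [key] at h3
  have hpos : 0 < 1 + α ⬝ᵥ α := by linarith
  set A := α ⬝ᵥ α
  set U := u ⬝ᵥ u
  have h4 : 2 * (1 + A)⁻¹ * U ≤ (1 + A)⁻¹ ^ 2 * (U * A) := by linarith
  have h5 : 2 * (1 + A) * U ≤ U * A := by
    have := mul_le_mul_of_nonneg_left h4 (sq_nonneg (1 + A))
    have e1 : (1 + A) ^ 2 * (2 * (1 + A)⁻¹ * U) = 2 * (1 + A) * U := by field_simp
    have e2 : (1 + A) ^ 2 * ((1 + A)⁻¹ ^ 2 * (U * A)) = U * A := by field_simp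
    rwa [e1, e2] at this
  have h6 : U = 0 := by nlinarith [mul_nonneg hU hA]
  exact dotProduct_self_eq_zero.1 h6

theorem stmt_1
    (m K n D : ℕ)
    (hm : 1 ≤ m) (hK : 3 ≤ K) (hn : 1 ≤ n) (hdiv : 8 * (K - 2) ∣ n)
    (hD : K + 1 + m * n ≤ D)
    (φ : ℕ → ℝ) (hφ : ∀ j, 1 ≤ j → j ≤ K → 0 < φ j)
    (μ σξ : ℝ) (hσ : 0 < σξ)
    (v : ℕ → Fin D → ℝ)
    (hortho : ∀ i j, i ≤ K + m * n → j ≤ K + m * n →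
      (∑ t, v i t * v j t) = if i = j then (1 : ℝ) else 0)
    (y ysub ρ : Fin (m * n) → ℝ) (κ : Fin (m * n) → ℕ)
    (hy : ∀ i, y i = 1 ∨ y i = -1)
    (hysub : ∀ i, ysub i = 1 ∨ ysub i = -1)
    (hρ : ∀ i, ρ i = 1 ∨ ρ i = -1)
    (hκ : ∀ i, 3 ≤ κ i ∧ κ i ≤ K)
    (hblock : ∀ i j : Fin (m * n), i.1 / m = j.1 / m →
      y i = y j ∧ ysub i = ysub j ∧ κ i = κ j ∧ ρ i = ρ j)
    (hbal : ∀ (a b r : ℝ) (c : ℕ), (a = 1 ∨ a = -1) → (b = 1 ∨ b = -1) →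
      (r = 1 ∨ r = -1) → 3 ≤ c → c ≤ K →
      Set.ncard {i : Fin (m * n) | y i = a ∧ ysub i = b ∧ κ i = c ∧ ρ i = r}
        = m * n / (8 * (K - 2)))
    (x : Fin (m * n) → Fin D → ℝ)
    (hx : ∀ i, x i = fun t => v 0 t + y i * φ 1 * v 1 t + (ysub i * φ 2 + μ) * v 2 t
      + ρ i * φ (κ i) * v (κ i) t + σξ * v (K + 1 + i.1) t)
    (M Mp : Matrix (Fin D) (Fin D) ℝ)
    (hM : M = ((m * n : ℝ))⁻¹ • ∑ i, Matrix.vecMulVec (x i) (x i))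
    (xbar : ℝ → Fin D → ℝ)
    (hxbar : ∀ ε, xbar ε = (2 / (m * n : ℝ)) •
      ∑ i, Set.indicator {j : Fin (m * n) | y j = ε} x i)
    (hMp : Mp = (2 : ℝ)⁻¹ • (Matrix.vecMulVec (xbar 1) (xbar 1)
      + Matrix.vecMulVec (xbar (-1)) (xbar (-1))))
    (hμ : μ = 0) (p : ℕ) (hp : 3 ≤ p) :
    ∀ Wss : Matrix (Fin p) (Fin D) ℝ,
      (∀ W : Matrix (Fin p) (Fin D) ℝ, CLTraceLoss Mp M Wss ≤ CLTraceLoss Mp M W) →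
      (∀ W : Matrix (Fin p) (Fin D) ℝ,
        (∀ W' : Matrix (Fin p) (Fin D) ℝ, CLTraceLoss Mp M W ≤ CLTraceLoss Mp M W') →
        Real.sqrt (∑ i, ∑ j, (Wss i j) ^ 2) ≤ Real.sqrt (∑ i, ∑ j, (W i j) ^ 2)) →
      Wss.mulVec (v 2) = 0 := by
  intro Wss hmin hnorm
  subst hμ
  have hm0 : (0 : ℝ) < m := by exact_mod_cast hm
  have hn0 : (0 : ℝ) < n := by exact_mod_cast hn
  have hN : (0 : ℝ) < (m : ℝ) * n := mul_pos hm0 hn0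
  have hMp' := aux_Mp x y hy ((m * n : ℝ))⁻¹ xbar Mp
    (by intro ε; rw [hxbar ε, div_eq_mul_inv]) hMp
  have hloss := fun W : Matrix (Fin p) (Fin D) ℝ => aux_loss x y M Mp _ hM hMp' W
  have hφ2 : 0 < φ 2 := hφ 2 (by norm_num) (by omega)
  -- inner products
  have hdot : ∀ i j, i ≤ K + m * n → j ≤ K + m * n →
      v i ⬝ᵥ v j = if i = j then (1 : ℝ) else 0 := hortho
  have hxv : ∀ i, x i = v 0 + (y i * φ 1) • v 1 + (ysub i * φ 2) • v 2
      + (ρ i * φ (κ i)) • v (κ i) + σξ • v (K + 1 + i.1) := by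
    intro i
    rw [hx i]
    funext t
    simp
  have hnoise : ∀ i j : Fin (m * n), v (K + 1 + j.1) ⬝ᵥ x i = if i = j then σξ else 0 := by
    intro i j
    have hi := i.2
    have hj := j.2
    have hk := hκ i
    rw [hxv i]
    simp only [dotProduct_add, dotProduct_smul, smul_eq_mul]
    rw [hdot _ 0 (by omega) (by omega), hdot _ 1 (by omega) (by omega),
      hdot _ 2 (by omega) (by omega), hdot _ (κ i) (by omega) (by omega),
      hdot _ (K + 1 + i.1) (by omega) (by omega), if_neg (by omega), if_neg (by omega),
      if_neg (by omega), if_neg (by omega)]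
    by_cases h : i = j
    · subst h; simp
    · have : ¬ (K + 1 + j.1 = K + 1 + i.1) := fun h' => h (Fin.ext (by omega))
      rw [if_neg this, if_neg h]; ring
  have hv2 : ∀ i : Fin (m * n), v 2 ⬝ᵥ x i = ysub i * φ 2 := by
    intro i
    have hi := i.2
    have hk := hκ i
    rw [hxv i]
    simp only [dotProduct_add, dotProduct_smul, smul_eq_mul]
    rw [hdot _ 0 (by omega) (by omega), hdot _ 1 (by omega) (by omega),
      hdot _ 2 (by omega) (by omega), hdot _ (κ i) (by omega) (by omega),
      hdot _ (K + 1 + i.1) (by omega) (by omega), if_neg (by omega), if_neg (by omega),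
      if_pos rfl, if_neg (by omega), if_neg (by omega)]
    ring
  -- Gram matrix of the minimizer
  have hgram : ∀ i j, (Wss *ᵥ x i) ⬝ᵥ (Wss *ᵥ x j) = 1 + y i * y j := by
    let w : ℝ → ℝ → Fin D → ℝ := fun a b => σξ⁻¹ • ∑ j : Fin (m * n), (a + b * y j) • v (K + 1 + j.1)
    let W0 : Matrix (Fin p) (Fin D) ℝ := Matrix.of fun r =>
      w (if r.1 = 0 then 1 else 0) (if r.1 = 1 then 1 else 0)
    have hw : ∀ a b i, w a b ⬝ᵥ x i = a + b * y i := by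
      intro a b i
      simp only [w, smul_dotProduct, sum_dotProduct, hnoise, smul_eq_mul, mul_ite, mul_zero,
        Finset.sum_ite_eq, Finset.mem_univ, if_true]
      field_simp
    have hW0 : ∀ i r, (W0 *ᵥ x i) r = (if r.1 = 0 then 1 else 0)
        + (if r.1 = 1 then 1 else 0) * y i := fun i r => hw _ _ i
    have hG0 : ∀ i j, (W0 *ᵥ x i) ⬝ᵥ (W0 *ᵥ x j) = 1 + y i * y j := by
      intro i j
      obtain ⟨q, rfl⟩ : ∃ q, p = q + 2 := ⟨p - 2, by omega⟩
      rw [dotProduct, Fin.sum_univ_succ, Fin.sum_univ_succ]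
      simp [hW0]
    have h := hmin W0
    rw [hloss, hloss] at h
    have h' := le_of_mul_le_mul_left h (by positivity)
    simp only [hG0, Finset.sum_sub_distrib] at h'
    have h'' : ∑ i, ∑ j, ((Wss *ᵥ x i) ⬝ᵥ (Wss *ᵥ x j) - (1 + y i * y j)) ^ 2 ≤ 0 := by
      simpa using h'
    have h0 := le_antisymm h'' (Finset.sum_nonneg fun i _ => Finset.sum_nonneg fun j _ => sq_nonneg _)
    intro i j
    have h1 := (Finset.sum_eq_zero_iff_of_nonneg
      (fun i _ => Finset.sum_nonneg fun j _ => sq_nonneg _)).1 h0 i (Finset.mem_univ i)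
    have h2 := (Finset.sum_eq_zero_iff_of_nonneg (fun j _ => sq_nonneg _)).1 h1 j (Finset.mem_univ j)
    have h3 := pow_eq_zero_iff (two_ne_zero) |>.1 h2
    linarith
  have hB := aux_balance _ K y ysub ρ κ hy hysub hρ hκ hbal
  have hs1 : ∑ i, ysub i = 0 := by simpa using hB (fun _ _ _ => 1)
  have hsy : ∑ i, ysub i * y i = 0 := hB (fun a _ _ => a)
  -- the subclass combination of images vanishes
  have hZ : Wss *ᵥ (∑ i, ysub i • x i) = 0 := by
    apply dotProduct_self_eq_zero.1
    rw [Matrix.mulVec_sum]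
    simp only [Matrix.mulVec_smul, sum_dotProduct, dotProduct_sum, smul_dotProduct,
      dotProduct_smul, smul_eq_mul, hgram]
    trans ∑ i, ∑ j, (ysub i * ysub j + (ysub i * y i) * (ysub j * y j))
    · refine Finset.sum_congr rfl fun i _ => ?_
      try rw [Finset.mul_sum]
      refine Finset.sum_congr rfl fun j _ => ?_
      ring
    · simp only [Finset.sum_add_distrib, ← Finset.sum_mul_sum, hs1, hsy]
      simp
  have hcomb : ∑ i, ysub i • x i = ((m * n : ℝ) * φ 2) • v 2
      + σξ • ∑ i : Fin (m * n), ysub i • v (K + 1 + i.1) := by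
    funext t
    have h1 := hB (fun a c r => v 0 t + a * φ 1 * v 1 t + r * φ c * v c t)
    have h2 : ∑ i, ysub i * ysub i = (m * n : ℝ) := by
      have : ∀ i, ysub i * ysub i = 1 := by
        intro i; rcases hysub i with h | h <;> rw [h] <;> norm_num
      simp [this]
    simp only [Finset.sum_apply, Pi.smul_apply, Pi.add_apply, smul_eq_mul]
    rw [← h2, ← add_zero (_ + _), ← h1]
    simp only [Finset.mul_sum, Finset.sum_mul, ← Finset.sum_add_distrib]
    refine Finset.sum_congr rfl fun i _ => ?_
    rw [hx i]
    ring
  -- the direction orthogonal to the data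
  let α : Fin D → ℝ := σξ • v 2 - φ 2 • ∑ i : Fin (m * n), ysub i • v (K + 1 + i.1)
  have hα : ∀ i, α ⬝ᵥ x i = 0 := by
    intro i
    simp only [α, sub_dotProduct, smul_dotProduct, sum_dotProduct, hnoise, hv2, smul_eq_mul,
      mul_ite, mul_zero, Finset.sum_ite_eq, Finset.mem_univ, if_true]
    ring
  have hWα : Wss *ᵥ α = 0 := by
    apply aux_minnorm
    intro s
    have himg : ∀ i, (Wss - s • Matrix.vecMulVec (Wss *ᵥ α) α) *ᵥ x i = Wss *ᵥ x i := by
      intro i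
      rw [Matrix.sub_mulVec, Matrix.smul_mulVec, Matrix.vecMulVec_mulVec, hα]
      simp
    have h := hnorm (Wss - s • Matrix.vecMulVec (Wss *ᵥ α) α) (by
      intro W'
      refine le_trans (le_of_eq ?_) (hmin W')
      rw [hloss, hloss]
      simp only [himg])
    exact (Real.sqrt_le_sqrt_iff (Finset.sum_nonneg fun i _ =>
      Finset.sum_nonneg fun j _ => sq_nonneg _)).1 h
  rw [hcomb, Matrix.mulVec_add, Matrix.mulVec_smul, Matrix.mulVec_smul] at hZ
  simp only [α] at hWα
  rw [Matrix.mulVec_sub, Matrix.mulVec_smul, Matrix.mulVec_smul] at hWα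
  funext r
  have e1 := congrFun hZ r
  have e2 := congrFun hWα r
  simp only [Pi.add_apply, Pi.sub_apply, Pi.smul_apply, smul_eq_mul, Pi.zero_apply] at e1 e2
  have e3 : ((m * n : ℝ) * φ 2 ^ 2 + σξ ^ 2) * (Wss *ᵥ v 2) r = 0 := by
    linear_combination φ 2 * e1 + σξ * e2
  have hne : ((m * n : ℝ) * φ 2 ^ 2 + σξ ^ 2) ≠ 0 := by positivity
  simpa [hne] using e3
end

section
/- (Deterministic core of Theorem 5.1, part 2: feature suppression by the minimum-norm minimizer.) In the structured contrastive dataset with μ = 0 and 1 ≤ p ≤ K, suppose that at least p elements of the (K−1)-tuple (1, φ_2², φ_3²/(K−2), …, φ_K²/(K−2)) are strictly greater than φ_1². Then every minimum-norm global minimizer of L_UCL — every W** ∈ ℝ^{p×D} minimizing the Frobenius norm among all global minimizers of L_UCL — satisfies W** v_1 = 0; the class feature v_1 is suppressed. -/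
open Matrix

lemma top_set {ι : Type*} [Fintype ι] [DecidableEq ι] (l : ι → ℝ) (o : ι) (p : ℕ) (hp : 1 ≤ p)
    (h : p ≤ (Finset.univ.filter (fun j => l o < l j)).card) :
    ∃ (T : Finset ι) (t : ℝ), T.card = p ∧ (∀ j ∈ T, t ≤ l j) ∧ (∀ j, j ∉ T → l j ≤ t) ∧ l o < t := by
  set J := Finset.univ.filter (fun j => l o < l j) with hJ
  have hne : (Finset.powersetCard p J).Nonempty := Finset.powersetCard_nonempty.2 h
  obtain ⟨T, hT, hmax⟩ := Finset.exists_max_image (Finset.powersetCard p J) (fun T => ∑ j ∈ T, l j) hne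
  rw [Finset.mem_powersetCard] at hT
  have hTne : T.Nonempty := by
    rw [← Finset.card_pos]; omega
  obtain ⟨k, hk, hmin⟩ := Finset.exists_min_image T l hTne
  have hko : l o < l k := by
    have := hT.1 hk
    simpa [hJ] using this
  refine ⟨T, l k, hT.2, hmin, ?_, hko⟩
  intro j hj
  by_cases hjJ : j ∈ J
  · have hj' : j ∉ T.erase k := fun h => hj (Finset.mem_of_mem_erase h)
    have := hmax (insert j (T.erase k)) (by
      rw [Finset.mem_powersetCard]
      refine ⟨?_, ?_⟩
      · intro a ha
        rcases Finset.mem_insert.1 ha with rfl | ha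
        · exact hjJ
        · exact hT.1 (Finset.mem_of_mem_erase ha)
      · rw [Finset.card_insert_of_notMem hj', Finset.card_erase_of_mem hk, hT.2]; omega)
    rw [Finset.sum_insert hj'] at this
    have h2 := Finset.add_sum_erase T l hk
    linarith
  · have : ¬ l o < l j := by simpa [hJ] using hjJ
    linarith

lemma loss_eq {p D : ℕ} (P M : Matrix (Fin D) (Fin D) ℝ) (hM : Mᵀ = M)
    (W : Matrix (Fin p) (Fin D) ℝ) :
    CLTraceLoss P M W = (∑ r, ∑ s, (W r ⬝ᵥ M *ᵥ W s - if r = s then 1 else 0) ^ 2) - p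
      + 2 * ((∑ r, W r ⬝ᵥ M *ᵥ W r) - ∑ r, W r ⬝ᵥ P *ᵥ W r) := by
  have hent : ∀ (Q : Matrix (Fin D) (Fin D) ℝ) r s, (W * Q * Wᵀ) r s = W r ⬝ᵥ Q *ᵥ W s := by
    intro Q r s
    rw [Matrix.mul_assoc]
    simp only [Matrix.mul_apply, dotProduct, mulVec, Matrix.transpose_apply]
  have h1 : Matrix.trace (Wᵀ * W * P) = ∑ r, W r ⬝ᵥ P *ᵥ W r := by
    rw [Matrix.mul_assoc, Matrix.trace_mul_comm]
    simp only [Matrix.trace, Matrix.diag, hent]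
  have hsym : ∀ r s, W r ⬝ᵥ M *ᵥ W s = W s ⬝ᵥ M *ᵥ W r := by
    intro r s
    conv_rhs => rw [← hM]
    rw [Matrix.mulVec_transpose, Matrix.dotProduct_mulVec, dotProduct_comm]
  have h2 : Matrix.trace (Wᵀ * W * M * (Wᵀ * W) * M) = ∑ r, ∑ s, (W r ⬝ᵥ M *ᵥ W s) ^ 2 := by
    have : Wᵀ * W * M * (Wᵀ * W) * M = Wᵀ * (W * M * Wᵀ * W * M) := by
      simp only [Matrix.mul_assoc]
    rw [this, Matrix.trace_mul_comm]
    have : W * M * Wᵀ * W * M * Wᵀ = (W * M * Wᵀ) * (W * M * Wᵀ) := by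
      simp only [Matrix.mul_assoc]
    rw [this]
    simp only [Matrix.trace, Matrix.diag, Matrix.mul_apply (M := W * M * Wᵀ), hent]
    refine Finset.sum_congr rfl fun r _ => Finset.sum_congr rfl fun s _ => ?_
    rw [hsym s r]; ring
  have h3 : ∑ r : Fin p, ∑ s : Fin p, (W r ⬝ᵥ M *ᵥ W s - if r = s then (1:ℝ) else 0) ^ 2
      = (∑ r, ∑ s, (W r ⬝ᵥ M *ᵥ W s) ^ 2) - 2 * (∑ r, W r ⬝ᵥ M *ᵥ W r) + p := by
    have : ∀ r s : Fin p, (W r ⬝ᵥ M *ᵥ W s - if r = s then (1:ℝ) else 0) ^ 2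
      = (W r ⬝ᵥ M *ᵥ W s) ^ 2 - (if r = s then 2 * (W r ⬝ᵥ M *ᵥ W s) else 0) + if r = s then 1 else 0 := by
      intro r s; split_ifs <;> ring
    simp only [this, Finset.sum_add_distrib, Finset.sum_sub_distrib, Finset.sum_ite_eq,
      Finset.mem_univ, if_true, Finset.mul_sum]
    simp
  unfold CLTraceLoss
  rw [Matrix.trace_add, Matrix.trace_smul, h1, h2, h3, smul_eq_mul]
  ring

/-- orthogonal decomposition of the quadratic form -/
lemma decomp {D : ℕ} {ι : Type*} [Fintype ι] [DecidableEq ι] (M : Matrix (Fin D) (Fin D) ℝ)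
    (hM : Mᵀ = M) (w : ι → Fin D → ℝ) (l : ι → ℝ)
    (hw : ∀ j k, w j ⬝ᵥ w k = if j = k then 1 else 0)
    (hMw : ∀ j, M *ᵥ w j = l j • w j) (u : Fin D → ℝ) :
    ∃ r : Fin D → ℝ, u = ∑ j, (u ⬝ᵥ w j) • w j + r ∧ (∀ j, r ⬝ᵥ w j = 0) ∧
      u ⬝ᵥ u = ∑ j, (u ⬝ᵥ w j) ^ 2 + r ⬝ᵥ r ∧
      u ⬝ᵥ M *ᵥ u = ∑ j, l j * (u ⬝ᵥ w j) ^ 2 + r ⬝ᵥ M *ᵥ r := by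
  set c : ι → ℝ := fun j => u ⬝ᵥ w j with hc
  set a : Fin D → ℝ := ∑ j, c j • w j with ha
  have haw : ∀ j, a ⬝ᵥ w j = c j := by
    intro j
    simp [ha, sum_dotProduct, smul_dotProduct, hw]
  have hr : ∀ j, (u - a) ⬝ᵥ w j = 0 := by
    intro j; rw [sub_dotProduct, haw]; simp [hc]
  have hra : (u - a) ⬝ᵥ a = 0 := by
    conv_lhs => rw [ha]
    rw [dotProduct_sum]
    simp only [dotProduct_smul]
    simp only [← ha, hr]; simp
  have hMa : M *ᵥ a = ∑ j, (c j * l j) • w j := by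
    rw [ha, Matrix.mulVec_sum]
    simp only [Matrix.mulVec_smul, hMw, smul_smul]
  have hrMa : (u - a) ⬝ᵥ M *ᵥ a = 0 := by
    rw [hMa, dotProduct_sum]
    simp only [dotProduct_smul, hr]; simp
  have haMr : a ⬝ᵥ M *ᵥ (u - a) = 0 := by
    conv_lhs => rw [← hM]
    rw [Matrix.mulVec_transpose, dotProduct_comm, ← Matrix.dotProduct_mulVec]
    exact hrMa
  have haa : a ⬝ᵥ a = ∑ j, c j ^ 2 := by
    conv_lhs => rhs; rw [ha]
    rw [dotProduct_sum]
    simp only [dotProduct_smul, haw, smul_eq_mul, sq]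
  have haMa : a ⬝ᵥ M *ᵥ a = ∑ j, l j * c j ^ 2 := by
    rw [hMa, dotProduct_sum]
    simp only [dotProduct_smul, haw, smul_eq_mul]
    exact Finset.sum_congr rfl fun j _ => by ring
  have hu : u = a + (u - a) := by abel
  refine ⟨u - a, hu, hr, ?_, ?_⟩
  · conv_lhs => rw [hu]
    rw [add_dotProduct, dotProduct_add, dotProduct_add, hra, dotProduct_comm a (u - a), hra, haa]
    simp [hc]
  · conv_lhs => rw [hu]
    rw [Matrix.mulVec_add, add_dotProduct, dotProduct_add, dotProduct_add, hrMa, haMr, haMa]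
    simp [hc]

lemma core {p D : ℕ} {ι : Type*} [Fintype ι] [DecidableEq ι] (P M : Matrix (Fin D) (Fin D) ℝ)
    (hM : Mᵀ = M) (w : ι → Fin D → ℝ) (l : ι → ℝ)
    (hw : ∀ j k, w j ⬝ᵥ w k = if j = k then 1 else 0)
    (hMw : ∀ j, M *ᵥ w j = l j • w j) (s : ℝ) (hs : 0 < s) (hsl : ∀ j, s ≤ l j)
    (hpos : ∀ u, 0 ≤ u ⬝ᵥ M *ᵥ u)
    (hrest : ∀ u, (∀ j, u ⬝ᵥ w j = 0) → u ⬝ᵥ M *ᵥ u ≤ s * (u ⬝ᵥ u))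
    (hPM : ∀ u, u ⬝ᵥ P *ᵥ u ≤ u ⬝ᵥ M *ᵥ u)
    (hPw : ∀ j, w j ⬝ᵥ P *ᵥ w j = l j)
    (o : ι) (hp : 1 ≤ p) (hcount : p ≤ (Finset.univ.filter (fun j => l o < l j)).card)
    (W : Matrix (Fin p) (Fin D) ℝ)
    (hmin : ∀ W' : Matrix (Fin p) (Fin D) ℝ, CLTraceLoss P M W ≤ CLTraceLoss P M W')
    (hnorm : ∀ W₁ : Matrix (Fin p) (Fin D) ℝ,
        (∀ W' : Matrix (Fin p) (Fin D) ℝ, CLTraceLoss P M W₁ ≤ CLTraceLoss P M W') →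
        ∑ r, W r ⬝ᵥ W r ≤ ∑ r, W₁ r ⬝ᵥ W₁ r)
    (z : Fin D → ℝ) (hz : ∀ j, j ≠ o → z ⬝ᵥ w j = 0) : W *ᵥ z = 0 := by
  have hl : ∀ j, 0 < l j := fun j => hs.trans_le (hsl j)
  obtain ⟨T, t, hTc, hT1, hT2, hot⟩ := top_set l o p hp hcount
  have htpos : 0 < t := (hl o).trans hot
  have hoT : o ∉ T := fun h => absurd (hT1 o h) (not_le.2 hot)
  have hlow : ∀ W' : Matrix (Fin p) (Fin D) ℝ, -(p : ℝ) ≤ CLTraceLoss P M W' := by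
    intro W'
    rw [loss_eq P M hM]
    have h1 : 0 ≤ ∑ r, ∑ s, (W' r ⬝ᵥ M *ᵥ W' s - if r = s then (1:ℝ) else 0) ^ 2 :=
      Finset.sum_nonneg fun r _ => Finset.sum_nonneg fun s _ => sq_nonneg _
    have h2 : ∑ r, W' r ⬝ᵥ P *ᵥ W' r ≤ ∑ r, W' r ⬝ᵥ M *ᵥ W' r :=
      Finset.sum_le_sum fun r _ => hPM _
    linarith
  let e : Fin p ≃ T := (T.equivFinOfCardEq hTc).symm
  let V : Matrix (Fin p) (Fin D) ℝ := fun r => (Real.sqrt (l (e r)))⁻¹ • w (e r)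
  have hV : ∀ r, V r = (Real.sqrt (l (e r)))⁻¹ • w (e r) := fun r => rfl
  have hsq : ∀ j, (Real.sqrt (l j))⁻¹ * (Real.sqrt (l j))⁻¹ = (l j)⁻¹ := by
    intro j; rw [← mul_inv, Real.mul_self_sqrt (hl j).le]
  have hVl : CLTraceLoss P M V = -(p : ℝ) := by
    rw [loss_eq P M hM]
    have h1 : ∀ r s, V r ⬝ᵥ M *ᵥ V s = if r = s then 1 else 0 := by
      intro r s
      rw [hV, hV, Matrix.mulVec_smul, hMw, smul_dotProduct, dotProduct_smul, dotProduct_smul, hw]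
      by_cases h : r = s
      · subst h
        simp only [if_true, smul_eq_mul, mul_one]
        rw [← mul_assoc, hsq, inv_mul_cancel₀ (hl _).ne']
      · have : (e r : ι) ≠ e s := fun h' => h (e.injective (Subtype.ext h'))
        simp [this, h]
    have h2 : ∀ r, V r ⬝ᵥ P *ᵥ V r = 1 := by
      intro r
      rw [hV, Matrix.mulVec_smul, smul_dotProduct, dotProduct_smul, hPw]
      rw [smul_eq_mul, smul_eq_mul, ← mul_assoc, hsq, inv_mul_cancel₀ (hl _).ne']
    simp only [h1, h2]; simp
  have hVn : ∑ r, V r ⬝ᵥ V r = ∑ j ∈ T, (l j)⁻¹ := by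
    have : ∀ r, V r ⬝ᵥ V r = (l (e r))⁻¹ := by
      intro r
      rw [hV, smul_dotProduct, dotProduct_smul, hw]
      simp only [if_true, smul_eq_mul, mul_one, hsq]
    simp only [this]
    rw [Equiv.sum_comp e (fun j : T => (l j)⁻¹)]
    exact Finset.sum_coe_sort T (fun j => (l j)⁻¹)
  have hWn : ∑ r, W r ⬝ᵥ W r ≤ ∑ j ∈ T, (l j)⁻¹ := by
    rw [← hVn]; exact hnorm V (fun W' => by rw [hVl]; exact hlow W')
  have hWM : ∀ r s, W r ⬝ᵥ M *ᵥ W s = if r = s then 1 else 0 := by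
    have hle := hmin V
    rw [hVl, loss_eq P M hM] at hle
    have h2 : ∑ r, W r ⬝ᵥ P *ᵥ W r ≤ ∑ r, W r ⬝ᵥ M *ᵥ W r :=
      Finset.sum_le_sum fun r _ => hPM _
    have h1 : ∑ r, ∑ s, (W r ⬝ᵥ M *ᵥ W s - if r = s then (1:ℝ) else 0) ^ 2 = 0 :=
      le_antisymm (by linarith)
        (Finset.sum_nonneg fun r _ => Finset.sum_nonneg fun s _ => sq_nonneg _)
    intro r s
    rw [Finset.sum_eq_zero_iff_of_nonneg
      (fun r _ => Finset.sum_nonneg fun s _ => sq_nonneg _)] at h1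
    have h3 := h1 r (Finset.mem_univ _)
    rw [Finset.sum_eq_zero_iff_of_nonneg (fun s _ => sq_nonneg _)] at h3
    have h4 := h3 s (Finset.mem_univ _)
    have := pow_eq_zero_iff (two_ne_zero) |>.1 h4
    linarith
  have hC : ∀ j, l j * ∑ r, (W r ⬝ᵥ w j) ^ 2 ≤ 1 := by
    intro j
    set C := ∑ r, (W r ⬝ᵥ w j) ^ 2 with hCdef
    set g : Fin D → ℝ := ∑ r, (W r ⬝ᵥ w j) • W r with hg
    have hgM : g ⬝ᵥ M *ᵥ g = C := by
      rw [hg, Matrix.mulVec_sum, sum_dotProduct]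
      simp only [dotProduct_sum, Matrix.mulVec_smul, smul_dotProduct, dotProduct_smul, hWM]
      simp [hCdef, sq]
    have hgw : g ⬝ᵥ w j = C := by
      rw [hg, sum_dotProduct]
      simp only [smul_dotProduct, smul_eq_mul, hCdef, sq]
    obtain ⟨r, -, -, -, h4⟩ := decomp M hM w l hw hMw g
    have h5 : l j * (g ⬝ᵥ w j) ^ 2 ≤ ∑ k, l k * (g ⬝ᵥ w k) ^ 2 :=
      Finset.single_le_sum (f := fun k => l k * (g ⬝ᵥ w k) ^ 2)
        (fun k _ => mul_nonneg (hl k).le (sq_nonneg _)) (Finset.mem_univ j)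
    have h6 := hpos r
    rw [hgw] at h5
    rw [hgM] at h4
    have h7 : l j * C ^ 2 ≤ C := by linarith
    have hC0 : 0 ≤ C := Finset.sum_nonneg fun r _ => sq_nonneg _
    rcases hC0.eq_or_lt with h | h
    · rw [← h]; simp
    · have : (l j * C) * C ≤ 1 * C := by nlinarith
      exact le_of_mul_le_mul_right this h
  choose R hR1 hR2 hR3 hR4 using fun r => decomp M hM w l hw hMw (W r)
  set C : ι → ℝ := fun j => ∑ r, (W r ⬝ᵥ w j) ^ 2 with hCdef
  have hC0 : ∀ j, 0 ≤ C j := fun j => Finset.sum_nonneg fun r _ => sq_nonneg _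
  set Q := ∑ r, R r ⬝ᵥ R r with hQ
  have hRR : ∀ r, 0 ≤ R r ⬝ᵥ R r := fun r => by
    simp only [dotProduct]; exact Finset.sum_nonneg fun i _ => mul_self_nonneg _
  have hQ0 : 0 ≤ Q := Finset.sum_nonneg fun r _ => hRR r
  have hA : ∑ r, W r ⬝ᵥ W r = ∑ j, C j + Q := by
    simp only [hR3 _, Finset.sum_add_distrib]
    rw [Finset.sum_comm]
  have hB : (p : ℝ) ≤ ∑ j, l j * C j + s * Q := by
    have h1 : ∑ r, W r ⬝ᵥ M *ᵥ W r = p := by simp [hWM]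
    rw [← h1]
    simp only [hR4 _, Finset.sum_add_distrib]
    rw [Finset.sum_comm]
    simp only [hCdef, Finset.mul_sum, hQ]
    gcongr with r
    exact hrest _ (hR2 r)
  have hterm : ∀ j, (if j ∈ T then t * (l j)⁻¹ - 1 else 0) + (if j = o then (t - l o) * C o else 0)
      ≤ (t - l j) * C j := by
    intro j
    by_cases hj : j ∈ T
    · have hjo : j ≠ o := fun h => hoT (h ▸ hj)
      simp only [hj, hjo, if_true, if_false, add_zero]
      have h1 : C j ≤ (l j)⁻¹ := by
        have h0 := hC j
        rw [inv_eq_one_div, le_div_iff₀ (hl j)]; linarith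
      have h2 := hT1 j hj
      have h3 : (l j - t) * C j ≤ (l j - t) * (l j)⁻¹ := mul_le_mul_of_nonneg_left h1 (by linarith)
      have h4 : l j * (l j)⁻¹ = 1 := mul_inv_cancel₀ (hl j).ne'
      linarith
    · by_cases hjo : j = o
      · subst hjo; simp [hj]
      · simp only [hj, hjo, if_false, add_zero]
        exact mul_nonneg (by linarith [hT2 j hj]) (hC0 j)
  have hsum := Finset.sum_le_sum (fun j (_ : j ∈ Finset.univ) => hterm j)
  rw [Finset.sum_add_distrib, Finset.sum_ite_eq', if_pos (Finset.mem_univ _), Finset.sum_ite_mem,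
    Finset.univ_inter, Finset.sum_sub_distrib, ← Finset.mul_sum] at hsum
  simp only [Finset.sum_const, hTc, nsmul_eq_mul, mul_one, sub_mul, Finset.sum_sub_distrib,
    ← Finset.mul_sum] at hsum
  have hkey : (t - l o) * C o + (t - s) * Q ≤ 0 := by
    have h1 : t * (∑ j, C j + Q) ≤ t * ∑ j ∈ T, (l j)⁻¹ :=
      mul_le_mul_of_nonneg_left (hA ▸ hWn) htpos.le
    nlinarith
  have hst : 0 < t - s := by linarith [hsl o]
  have h1 : 0 ≤ (t - l o) * C o := mul_nonneg (by linarith) (hC0 o)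
  have h2 : 0 ≤ (t - s) * Q := mul_nonneg hst.le hQ0
  have hCo : C o = 0 := by
    have : (t - l o) * C o = 0 := by linarith
    exact (mul_eq_zero.1 this).resolve_left (by linarith)
  have hQz : Q = 0 := by
    have : (t - s) * Q = 0 := by linarith
    exact (mul_eq_zero.1 this).resolve_left (by linarith)
  ext r
  have hr0 : R r = 0 := by
    have := (Finset.sum_eq_zero_iff_of_nonneg (fun r _ => hRR r)).1 hQz r (Finset.mem_univ _)
    exact dotProduct_self_eq_zero.1 this
  have hc0 : W r ⬝ᵥ w o = 0 := by
    have := (Finset.sum_eq_zero_iff_of_nonneg (fun r _ => sq_nonneg _)).1 hCo r (Finset.mem_univ _)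
    exact pow_eq_zero_iff two_ne_zero |>.1 this
  change W r ⬝ᵥ z = 0
  rw [hR1 r, hr0, add_zero, sum_dotProduct]
  refine Finset.sum_eq_zero fun j _ => ?_
  by_cases hj : j = o
  · subst hj; rw [hc0]; simp
  · rw [smul_dotProduct, dotProduct_comm (w j) z, hz j hj]; simp

lemma quad_form {D : ℕ} {I : Type*} [Fintype I] (c : ℝ) (x : I → Fin D → ℝ) (u : Fin D → ℝ) :
    u ⬝ᵥ (c • ∑ i, Matrix.vecMulVec (x i) (x i)) *ᵥ u = c * ∑ i, (u ⬝ᵥ x i) ^ 2 := by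
  rw [Matrix.smul_mulVec, dotProduct_smul, Matrix.sum_mulVec, dotProduct_sum, smul_eq_mul]
  congr 1
  refine Finset.sum_congr rfl fun i _ => ?_
  rw [Matrix.vecMulVec_mulVec]
  simp [dotProduct_smul, dotProduct_comm (x i) u, sq]

lemma feature_core {p D : ℕ} {ι I : Type*} [Fintype ι] [DecidableEq ι] [Fintype I] [DecidableEq I]
    (N σ : ℝ) (hN : 0 < N) (hσ : 0 < σ)
    (v : ι → Fin D → ℝ) (e : I → Fin D → ℝ)
    (hv : ∀ j k, v j ⬝ᵥ v k = if j = k then 1 else 0)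
    (he : ∀ i k, e i ⬝ᵥ e k = if i = k then 1 else 0)
    (hve : ∀ j i, v j ⬝ᵥ e i = 0)
    (g : ι → I → ℝ) (γ b : ι → ℝ) (hγ : ∀ j, 0 < γ j)
    (hg : ∀ j k, ∑ i, g j i * g k i = if j = k then N * γ j else 0)
    (x : I → Fin D → ℝ) (hx : ∀ i, x i = ∑ j, (b j * g j i) • v j + σ • e i)
    (P M : Matrix (Fin D) (Fin D) ℝ)
    (hM : M = N⁻¹ • ∑ i, Matrix.vecMulVec (x i) (x i))
    (hPM : ∀ u, u ⬝ᵥ P *ᵥ u ≤ u ⬝ᵥ M *ᵥ u)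
    (hPg : ∀ u j c, (∀ i, u ⬝ᵥ x i = c * g j i) → u ⬝ᵥ P *ᵥ u = u ⬝ᵥ M *ᵥ u)
    (o : ι) (hp : 1 ≤ p)
    (hcount : p ≤ (Finset.univ.filter (fun j => γ o * b o ^ 2 < γ j * b j ^ 2)).card)
    (W : Matrix (Fin p) (Fin D) ℝ)
    (hmin : ∀ W' : Matrix (Fin p) (Fin D) ℝ, CLTraceLoss P M W ≤ CLTraceLoss P M W')
    (hnorm : ∀ W₁ : Matrix (Fin p) (Fin D) ℝ,
        (∀ W' : Matrix (Fin p) (Fin D) ℝ, CLTraceLoss P M W₁ ≤ CLTraceLoss P M W') →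
        ∑ r, W r ⬝ᵥ W r ≤ ∑ r, W₁ r ⬝ᵥ W₁ r) : W *ᵥ v o = 0 := by
  set s : ℝ := σ ^ 2 / N with hs
  have hs0 : 0 < s := by positivity
  set l : ι → ℝ := fun j => γ j * b j ^ 2 + s with hl
  have hsl : ∀ j, s ≤ l j := fun j => by
    have := mul_nonneg (hγ j).le (sq_nonneg (b j)); simp only [hl]; linarith
  have hl0 : ∀ j, 0 < l j := fun j => hs0.trans_le (hsl j)
  have hquad : ∀ u, u ⬝ᵥ M *ᵥ u = N⁻¹ * ∑ i, (u ⬝ᵥ x i) ^ 2 := fun u => by rw [hM, quad_form]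
  have hMt : Mᵀ = M := by
    rw [hM, Matrix.transpose_smul, Matrix.transpose_sum]
    simp only [Matrix.transpose_vecMulVec]
  let h : ι → Fin D → ℝ := fun j => b j • v j + (σ / (N * γ j)) • ∑ i, g j i • e i
  have hh : ∀ j, h j = b j • v j + (σ / (N * γ j)) • ∑ i, g j i • e i := fun j => rfl
  have huh : ∀ u j, u ⬝ᵥ h j = b j * (u ⬝ᵥ v j) + (σ / (N * γ j)) * ∑ i, g j i * (u ⬝ᵥ e i) := by
    intro u j
    simp only [hh, dotProduct_add, dotProduct_smul, dotProduct_sum, smul_eq_mul]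
  have hux : ∀ u i, u ⬝ᵥ x i = ∑ j, b j * g j i * (u ⬝ᵥ v j) + σ * (u ⬝ᵥ e i) := by
    intro u i
    simp only [hx, dotProduct_add, dotProduct_smul, dotProduct_sum, smul_eq_mul]
  have hhv : ∀ j k, h j ⬝ᵥ v k = if j = k then b j else 0 := by
    intro j k
    rw [dotProduct_comm, huh, hv]
    simp only [hve, mul_zero, Finset.sum_const_zero, add_zero]
    simp [eq_comm]
  have hhe : ∀ j i, h j ⬝ᵥ e i = σ / (N * γ j) * g j i := by
    intro j i
    rw [dotProduct_comm, huh, dotProduct_comm (e i) (v j), hve]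
    simp [he]
  have hNγ : ∀ j, N * γ j ≠ 0 := fun j => (mul_pos hN (hγ j)).ne'
  have hhx : ∀ j i, h j ⬝ᵥ x i = (l j / γ j) * g j i := by
    intro j i
    rw [hux, hhe]
    simp only [hhv, mul_ite, mul_zero, Finset.sum_ite_eq, Finset.mem_univ, if_true, hl, hs]
    have := hγ j
    field_simp
  have hhh : ∀ j k, h j ⬝ᵥ h k = if j = k then l j / γ j else 0 := by
    intro j k
    rw [huh, hhv]
    have : ∑ i, g k i * (h j ⬝ᵥ e i) = σ / (N * γ j) * ∑ i, g k i * g j i := by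
      rw [Finset.mul_sum]
      exact Finset.sum_congr rfl fun i _ => by rw [hhe]; ring
    rw [this, hg]
    by_cases hjk : j = k
    · subst hjk
      simp only [if_true, hl, hs]
      have := hγ j
      field_simp
    · simp [hjk, Ne.symm hjk]
  have hMh : ∀ j, M *ᵥ h j = l j • h j := by
    intro j
    have h1 : M *ᵥ h j = N⁻¹ • ∑ i, (l j / γ j * g j i) • x i := by
      rw [hM, Matrix.smul_mulVec, Matrix.sum_mulVec]
      congr 1
      refine Finset.sum_congr rfl fun i _ => ?_
      rw [Matrix.vecMulVec_mulVec, dotProduct_comm, hhx, op_smul_eq_smul]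
    have h2 : ∑ i, g j i • x i = (N * γ j) • h j := by
      simp only [hx, smul_add, Finset.sum_add_distrib, Finset.smul_sum, smul_smul]
      rw [Finset.sum_comm]
      have : ∀ k, ∑ i, (g j i * (b k * g k i)) • v k = if j = k then (N * γ j * b j) • v j else 0 := by
        intro k
        rw [← Finset.sum_smul]
        have : ∑ i, g j i * (b k * g k i) = b k * ∑ i, g j i * g k i := by
          rw [Finset.mul_sum]; exact Finset.sum_congr rfl fun i _ => by ring
        rw [this, hg]
        split_ifs with hjk
        · subst hjk; rw [mul_comm]
        · simp
      simp only [this, Finset.sum_ite_eq, Finset.mem_univ, if_true, hh, smul_add, smul_smul,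
        Finset.smul_sum]
      congr 1
      refine Finset.sum_congr rfl fun i _ => ?_
      congr 1
      have := hγ j
      field_simp
    rw [h1]
    simp only [mul_smul]
    rw [← Finset.smul_sum, h2, smul_smul, smul_smul]
    congr 1
    have := hγ j
    field_simp
  have hq : ∀ j, 0 < l j / γ j := fun j => div_pos (hl0 j) (hγ j)
  let a : ι → ℝ := fun j => (Real.sqrt (l j / γ j))⁻¹
  have ha : ∀ j, a j * a j * (l j / γ j) = 1 := by
    intro j
    simp only [a]
    rw [← mul_inv, Real.mul_self_sqrt (hq j).le, inv_mul_cancel₀ (hq j).ne']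
  have ha0 : ∀ j, a j ≠ 0 := fun j h0 => by have := ha j; rw [h0] at this; simp at this
  have hw : ∀ j k, (a j • h j) ⬝ᵥ (a k • h k) = if j = k then 1 else 0 := by
    intro j k
    rw [smul_dotProduct, dotProduct_smul, hhh]
    split_ifs with hjk
    · subst hjk; rw [← ha j, smul_eq_mul, smul_eq_mul]; ring
    · simp
  have hMw : ∀ j, M *ᵥ (a j • h j) = l j • (a j • h j) := by
    intro j; rw [Matrix.mulVec_smul, hMh, smul_comm]
  refine core P M hMt (fun j => a j • h j) l hw hMw s hs0 hsl ?_ ?_ hPM ?_ o hp ?_ W hmin hnorm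
    (v o) ?_
  · intro u; rw [hquad]
    exact mul_nonneg (inv_nonneg.2 hN.le) (Finset.sum_nonneg fun i _ => sq_nonneg _)
  · intro u hu
    set ε : I → ℝ := fun i => u ⬝ᵥ e i with hε
    set d : ι → ℝ := fun j => (∑ i, g j i * ε i) / (N * γ j) with hd
    have hd' : ∀ j, ∑ i, g j i * ε i = N * γ j * d j := fun j => by
      simp only [hd]; rw [mul_div_cancel₀ _ (hNγ j)]
    have hbd : ∀ j, b j * (u ⬝ᵥ v j) = - σ * d j := by
      intro j
      have := hu j
      rw [dotProduct_smul, smul_eq_mul] at this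
      have := (mul_eq_zero.1 this).resolve_left (ha0 j)
      rw [huh] at this
      simp only [hd]
      have h3 : σ / (N * γ j) * ∑ i, g j i * (u ⬝ᵥ e i) = σ * ((∑ i, g j i * ε i) / (N * γ j)) := by
        simp only [hε]; ring
      rw [h3] at this
      linarith
    set A : I → ℝ := fun i => ∑ j, g j i * d j with hA
    have hux' : ∀ i, u ⬝ᵥ x i = σ * (ε i - A i) := by
      intro i
      rw [hux]
      have : ∑ j, b j * g j i * (u ⬝ᵥ v j) = - σ * A i := by
        simp only [hA, Finset.mul_sum]
        refine Finset.sum_congr rfl fun j _ => ?_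
        calc b j * g j i * (u ⬝ᵥ v j) = g j i * (b j * (u ⬝ᵥ v j)) := by ring
          _ = _ := by rw [hbd]; ring
      rw [this]; ring
    have hεA : ∑ i, ε i * A i = ∑ j, N * γ j * d j ^ 2 := by
      simp only [hA, Finset.mul_sum]
      rw [Finset.sum_comm]
      refine Finset.sum_congr rfl fun j _ => ?_
      calc ∑ i, ε i * (g j i * d j) = (∑ i, g j i * ε i) * d j := by
            rw [Finset.sum_mul]; exact Finset.sum_congr rfl fun i _ => by ring
        _ = _ := by rw [hd']; ring
    have hAg : ∀ j, ∑ i, A i * g j i = N * γ j * d j := by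
      intro j
      simp only [hA, Finset.sum_mul]
      rw [Finset.sum_comm]
      have : ∀ k, ∑ i, g k i * d k * g j i = if j = k then N * γ j * d j else 0 := by
        intro k
        calc ∑ i, g k i * d k * g j i = (∑ i, g j i * g k i) * d k := by
              rw [Finset.sum_mul]; exact Finset.sum_congr rfl fun i _ => by ring
          _ = _ := by
            rw [hg]; split_ifs with hjk
            · subst hjk; rfl
            · simp
      simp only [this]; simp
    have hAA : ∑ i, A i * A i = ∑ j, N * γ j * d j ^ 2 := by
      calc ∑ i, A i * A i = ∑ i, ∑ j, A i * g j i * d j := by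
            refine Finset.sum_congr rfl fun i _ => ?_
            conv_lhs => rhs; simp only [hA]
            rw [Finset.mul_sum]
            exact Finset.sum_congr rfl fun j _ => by ring
        _ = _ := by
            rw [Finset.sum_comm]
            refine Finset.sum_congr rfl fun j _ => ?_
            rw [← Finset.sum_mul, hAg]; ring
    have hB : ∑ i, ε i ^ 2 ≤ u ⬝ᵥ u := by
      obtain ⟨r, -, -, h3, -⟩ := decomp (0 : Matrix (Fin D) (Fin D) ℝ) (by simp) e (fun _ => 0) he
        (by simp) u
      have : 0 ≤ r ⬝ᵥ r := by
        simp only [dotProduct]; exact Finset.sum_nonneg fun i _ => mul_self_nonneg _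
      rw [h3]; linarith
    have hexp : ∑ i, (u ⬝ᵥ x i) ^ 2 = σ ^ 2 * (∑ i, ε i ^ 2 - ∑ i, A i * A i) := by
      have : ∑ i, (u ⬝ᵥ x i) ^ 2 = σ ^ 2 * (∑ i, ε i ^ 2 - 2 * ∑ i, ε i * A i + ∑ i, A i * A i) := by
        simp only [hux', Finset.mul_sum, ← Finset.sum_sub_distrib, ← Finset.sum_add_distrib]
        exact Finset.sum_congr rfl fun i _ => by ring
      rw [this, hεA, hAA]; ring
    have hAA0 : 0 ≤ ∑ i, A i * A i := Finset.sum_nonneg fun i _ => mul_self_nonneg _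
    rw [hquad, hexp, hs]
    calc N⁻¹ * (σ ^ 2 * (∑ i, ε i ^ 2 - ∑ i, A i * A i)) ≤ N⁻¹ * (σ ^ 2 * (u ⬝ᵥ u)) := by
          gcongr; linarith
      _ = _ := by ring
  · intro j
    rw [hPg (a j • h j) j (a j * (l j / γ j)), hMw, dotProduct_smul, hw]
    · simp
    · intro i; rw [smul_dotProduct, hhx, smul_eq_mul]; ring
  · simpa [hl] using hcount
  · intro j hj
    rw [dotProduct_smul, dotProduct_comm, hhv, if_neg hj]; simp

/-- signal functions -/
def sigG : ℕ → ℝ → ℝ → ℝ → ℕ → ℝ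
  | 0, _, _, _, _ => 1
  | 1, a, _, _, _ => a
  | 2, _, b, _, _ => b
  | (j + 3), _, _, r, c => if c = j + 3 then r else 0

lemma sigG_orth (k j j' : ℕ) (hj : j ≤ k + 3) (hj' : j' ≤ k + 3) :
    ∑ a ∈ ({1, -1} : Finset ℝ), ∑ b ∈ ({1, -1} : Finset ℝ), ∑ r ∈ ({1, -1} : Finset ℝ),
      ∑ c ∈ Finset.Icc 3 (k + 3), sigG j a b r c * sigG j' a b r c
      = if j = j' then 8 * (if j ≤ 2 then (k + 1 : ℝ) else 1) else 0 := by
  have hne : (1 : ℝ) ∉ ({-1} : Finset ℝ) := by norm_num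
  simp only [Finset.sum_insert hne, Finset.sum_singleton]
  have hcard : ((Finset.Icc 3 (k + 3)).card : ℝ) = k + 1 := by simp
  rcases j with _ | _ | _ | j <;> rcases j' with _ | _ | _ | j' <;>
    simp [sigG]
  all_goals first | ring1 | (split_ifs <;> first | (exfalso; omega) | norm_num)

lemma balanced_sum {I : Type*} [Fintype I] (K q : ℕ) (y ysub ρ : I → ℝ) (κ : I → ℕ)
    (hy : ∀ i, y i = 1 ∨ y i = -1)
    (hysub : ∀ i, ysub i = 1 ∨ ysub i = -1)
    (hρ : ∀ i, ρ i = 1 ∨ ρ i = -1)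
    (hκ : ∀ i, 3 ≤ κ i ∧ κ i ≤ K)
    (hbal : ∀ (a b r : ℝ) (c : ℕ), (a = 1 ∨ a = -1) → (b = 1 ∨ b = -1) →
      (r = 1 ∨ r = -1) → 3 ≤ c → c ≤ K →
      Set.ncard {i : I | y i = a ∧ ysub i = b ∧ κ i = c ∧ ρ i = r} = q)
    (F : ℝ → ℝ → ℝ → ℕ → ℝ) :
    ∑ i, F (y i) (ysub i) (ρ i) (κ i) =
     q * ∑ a ∈ ({1, -1} : Finset ℝ), ∑ b ∈ ({1, -1} : Finset ℝ), ∑ r ∈ ({1, -1} : Finset ℝ),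
      ∑ c ∈ Finset.Icc 3 K, F a b r c := by
  classical
  set S := ({1, -1} : Finset ℝ) ×ˢ ({1, -1} : Finset ℝ) ×ˢ ({1, -1} : Finset ℝ) ×ˢ Finset.Icc 3 K
    with hS
  have h1 := Finset.sum_fiberwise_of_maps_to (s := Finset.univ) (t := S)
    (g := fun i => (y i, ysub i, ρ i, κ i)) (by
      intro i _
      simp only [hS, Finset.mem_product, Finset.mem_insert, Finset.mem_singleton, Finset.mem_Icc]
      exact ⟨hy i, hysub i, hρ i, hκ i⟩) (fun i => F (y i) (ysub i) (ρ i) (κ i))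
  rw [← h1]
  have h2 : ∀ z ∈ S, ∑ i ∈ Finset.univ.filter (fun i => (y i, ysub i, ρ i, κ i) = z),
      F (y i) (ysub i) (ρ i) (κ i) = q * F z.1 z.2.1 z.2.2.1 z.2.2.2 := by
    rintro ⟨a, b, r, c⟩ hz
    simp only [hS, Finset.mem_product, Finset.mem_insert, Finset.mem_singleton,
      Finset.mem_Icc] at hz
    obtain ⟨ha, hb, hr, hc1, hc2⟩ := hz
    rw [← hbal a b r c ha hb hr hc1 hc2]
    have : {i : I | y i = a ∧ ysub i = b ∧ κ i = c ∧ ρ i = r}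
      = ((Finset.univ.filter (fun i => (y i, ysub i, ρ i, κ i) = (a, b, r, c)) : Finset I) : Set I) := by
      ext i; simp; tauto
    rw [this, Set.ncard_coe_finset, ← nsmul_eq_mul]
    refine Finset.sum_eq_card_nsmul ?_
    intro i hi
    simp only [Finset.mem_filter, Finset.mem_univ, true_and, Prod.mk.injEq] at hi
    obtain ⟨h1, h2, h3, h4⟩ := hi
    rw [h1, h2, h3, h4]
  rw [Finset.sum_congr rfl h2, ← Finset.mul_sum, hS]
  simp only [Finset.sum_product]

lemma block_card (m n : ℕ) (hm : 1 ≤ m) (l : Fin n) :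
    (Finset.univ.filter (fun i : Fin (m * n) => i.1 / m = l.1)).card = m := by
  have : (Finset.univ.filter (fun i : Fin (m * n) => i.1 / m = l.1)).map Fin.valEmbedding
      = Finset.Ico (l.1 * m) (l.1 * m + m) := by
    ext a
    simp only [Finset.mem_map, Finset.mem_filter, Finset.mem_univ, true_and, Fin.valEmbedding_apply,
      Finset.mem_Ico]
    constructor
    · rintro ⟨i, hi, rfl⟩
      rw [Nat.div_eq_iff (by omega)] at hi
      omega
    · rintro ⟨h1, h2⟩
      have h3 : l.1 * m + m ≤ m * n := by
        have : (l.1 + 1) * m ≤ n * m := Nat.mul_le_mul_right m l.2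
        nlinarith
      refine ⟨⟨a, by omega⟩, ?_, rfl⟩
      rw [Nat.div_eq_iff (by omega)]
      simp only
      omega
  rw [← Finset.card_map Fin.valEmbedding, this]; simp

lemma block_form {D : ℕ} (m n : ℕ) (x : Fin (m * n) → Fin D → ℝ)
    (xtil : Fin n → Fin D → ℝ)
    (hxtil : ∀ l : Fin n, xtil l = (m : ℝ)⁻¹ •
      ∑ i, Set.indicator {j : Fin (m * n) | j.1 / m = l.1} x i)
    (u : Fin D → ℝ) (l : Fin n) :
    u ⬝ᵥ xtil l = (m : ℝ)⁻¹ *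
      ∑ i ∈ Finset.univ.filter (fun i : Fin (m * n) => i.1 / m = l.1), u ⬝ᵥ x i := by
  rw [hxtil, dotProduct_smul, dotProduct_sum, smul_eq_mul, Finset.sum_filter]
  congr 1
  refine Finset.sum_congr rfl fun i _ => ?_
  by_cases h : i.1 / m = l.1
  · rw [Set.indicator_of_mem (by exact h), if_pos h]
  · rw [Set.indicator_of_notMem (by exact h), if_neg h]; simp

lemma block_fiber (m n : ℕ) (hm : 1 ≤ m) (f : Fin (m * n) → ℝ) :
    ∑ l : Fin n, ∑ i ∈ Finset.univ.filter (fun i : Fin (m * n) => i.1 / m = l.1), f i = ∑ i, f i := by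
  have := Finset.sum_fiberwise_of_maps_to (s := Finset.univ) (t := (Finset.univ : Finset (Fin n)))
    (g := fun i : Fin (m * n) => (⟨i.1 / m, by
      rw [Nat.div_lt_iff_lt_mul (by omega)]; exact i.2.trans_eq (mul_comm m n)⟩ : Fin n))
    (fun _ _ => Finset.mem_univ _) f
  rw [← this]
  refine Finset.sum_congr rfl fun l _ => ?_
  refine Finset.sum_congr ?_ fun _ _ => rfl
  ext i
  simp [Fin.ext_iff]

theorem stmt_3
    (m K n D : ℕ)
    (hm : 1 ≤ m) (hK : 3 ≤ K) (hn : 1 ≤ n) (hdiv : 8 * (K - 2) ∣ n)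
    (hD : K + 1 + m * n ≤ D)
    (φ : ℕ → ℝ) (hφ : ∀ j, 1 ≤ j → j ≤ K → 0 < φ j)
    (μ σξ : ℝ) (hσ : 0 < σξ)
    (v : ℕ → Fin D → ℝ)
    (hortho : ∀ i j, i ≤ K + m * n → j ≤ K + m * n →
      (∑ t, v i t * v j t) = if i = j then (1 : ℝ) else 0)
    (y ysub ρ : Fin (m * n) → ℝ) (κ : Fin (m * n) → ℕ)
    (hy : ∀ i, y i = 1 ∨ y i = -1)
    (hysub : ∀ i, ysub i = 1 ∨ ysub i = -1)
    (hρ : ∀ i, ρ i = 1 ∨ ρ i = -1)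
    (hκ : ∀ i, 3 ≤ κ i ∧ κ i ≤ K)
    (hblock : ∀ i j : Fin (m * n), i.1 / m = j.1 / m →
      y i = y j ∧ ysub i = ysub j ∧ κ i = κ j ∧ ρ i = ρ j)
    (hbal : ∀ (a b r : ℝ) (c : ℕ), (a = 1 ∨ a = -1) → (b = 1 ∨ b = -1) →
      (r = 1 ∨ r = -1) → 3 ≤ c → c ≤ K →
      Set.ncard {i : Fin (m * n) | y i = a ∧ ysub i = b ∧ κ i = c ∧ ρ i = r}
        = m * n / (8 * (K - 2)))
    (x : Fin (m * n) → Fin D → ℝ)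
    (hx : ∀ i, x i = fun t => v 0 t + y i * φ 1 * v 1 t + (ysub i * φ 2 + μ) * v 2 t
      + ρ i * φ (κ i) * v (κ i) t + σξ * v (K + 1 + i.1) t)
    (M Mp : Matrix (Fin D) (Fin D) ℝ)
    (hM : M = ((m * n : ℝ))⁻¹ • ∑ i, Matrix.vecMulVec (x i) (x i))
    (xbar : ℝ → Fin D → ℝ)
    (hxbar : ∀ ε, xbar ε = (2 / (m * n : ℝ)) •
      ∑ i, Set.indicator {j : Fin (m * n) | y j = ε} x i)
    (hMp : Mp = (2 : ℝ)⁻¹ • (Matrix.vecMulVec (xbar 1) (xbar 1)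
      + Matrix.vecMulVec (xbar (-1)) (xbar (-1))))
    (xtil : Fin n → Fin D → ℝ)
    (hxtil : ∀ l : Fin n, xtil l = (m : ℝ)⁻¹ •
      ∑ i, Set.indicator {j : Fin (m * n) | j.1 / m = l.1} x i)
    (Mt : Matrix (Fin D) (Fin D) ℝ)
    (hMt : Mt = (n : ℝ)⁻¹ • ∑ l, Matrix.vecMulVec (xtil l) (xtil l))
    (hμ : μ = 0) (p : ℕ) (hp1 : 1 ≤ p) (hpK : p ≤ K)
    (hcount : p ≤ Set.ncard {j : ℕ | (j = 0 ∧ φ 1 ^ 2 < 1) ∨ (j = 2 ∧ φ 1 ^ 2 < φ 2 ^ 2) ∨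
      (3 ≤ j ∧ j ≤ K ∧ φ 1 ^ 2 < φ j ^ 2 / ((K : ℝ) - 2))}) :
    ∀ Wss : Matrix (Fin p) (Fin D) ℝ,
      (∀ W : Matrix (Fin p) (Fin D) ℝ, CLTraceLoss Mt M Wss ≤ CLTraceLoss Mt M W) →
      (∀ W : Matrix (Fin p) (Fin D) ℝ,
        (∀ W' : Matrix (Fin p) (Fin D) ℝ, CLTraceLoss Mt M W ≤ CLTraceLoss Mt M W') →
        Real.sqrt (∑ i, ∑ j, (Wss i j) ^ 2) ≤ Real.sqrt (∑ i, ∑ j, (W i j) ^ 2)) →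
      Wss.mulVec (v 1) = 0 := by
  intro W hmin hnorm
  obtain ⟨k, rfl⟩ : ∃ k, K = k + 3 := ⟨K - 3, by omega⟩
  have hmR : (0 : ℝ) < m := by exact_mod_cast hm
  have hnR : (0 : ℝ) < n := by exact_mod_cast hn
  have hkR : (0 : ℝ) < (k : ℝ) + 1 := by positivity
  have hk2 : k + 3 - 2 = k + 1 := by omega
  rw [hk2] at hdiv
  simp only [hk2] at hbal
  obtain ⟨q, hq⟩ : 8 * (k + 1) ∣ m * n := hdiv.mul_left m
  have hq' : m * n / (8 * (k + 1)) = q := by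
    rw [hq]; exact Nat.mul_div_cancel_left q (by omega)
  simp only [hq'] at hbal
  have hqR : (m : ℝ) * n = 8 * (k + 1) * q := by exact_mod_cast hq
  subst hμ
  have hMq : ∀ u, u ⬝ᵥ M *ᵥ u = ((m : ℝ) * n)⁻¹ * ∑ i, (u ⬝ᵥ x i) ^ 2 := fun u => by
    rw [hM, quad_form]
  have hPq : ∀ u, u ⬝ᵥ Mt *ᵥ u = (n : ℝ)⁻¹ * ∑ l, (u ⬝ᵥ xtil l) ^ 2 := fun u => by
    rw [hMt, quad_form]
  have hsig : ∀ j (i i' : Fin (m * n)), i.1 / m = i'.1 / m →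
      sigG j (y i) (ysub i) (ρ i) (κ i) = sigG j (y i') (ysub i') (ρ i') (κ i') := by
    intro j i i' h
    obtain ⟨h1, h2, h3, h4⟩ := hblock i i' h
    rw [h1, h2, h3, h4]
  have hfro : ∀ V : Matrix (Fin p) (Fin D) ℝ, ∑ r, V r ⬝ᵥ V r = ∑ i, ∑ j, (V i j) ^ 2 := by
    intro V
    simp only [dotProduct, sq]
  have hmain := feature_core (p := p) (ι := Fin (k + 3 + 1)) (I := Fin (m * n)) ((m : ℝ) * n) σξ
    (by positivity) hσ (fun j => v j.1) (fun i => v (k + 3 + 1 + i.1))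
    (fun j j' => by
      have := hortho j.1 j'.1 (by omega) (by omega)
      simp only [Fin.ext_iff]; exact this)
    (fun i i' => by
      have := hortho (k + 3 + 1 + i.1) (k + 3 + 1 + i'.1) (by omega) (by omega)
      simp only [Fin.ext_iff]
      rw [dotProduct, this]
      simp)
    (fun j i => by
      have := hortho j.1 (k + 3 + 1 + i.1) (by omega) (by omega)
      rw [dotProduct, this, if_neg (by omega)])
    (fun j i => sigG j.1 (y i) (ysub i) (ρ i) (κ i))
    (fun j => if j.1 ≤ 2 then 1 else ((k : ℝ) + 1)⁻¹)
    (fun j => if j.1 = 0 then 1 else φ j.1)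
    (fun j => by split_ifs <;> positivity)
    (fun j j' => by
      rw [balanced_sum (k + 3) q y ysub ρ κ hy hysub hρ hκ hbal
        (fun a b r c => sigG j.1 a b r c * sigG j'.1 a b r c),
        sigG_orth k j.1 j'.1 (by omega) (by omega), hqR]
      simp only [Fin.ext_iff]
      split_ifs
      · ring
      · field_simp
      · simp)
    x
    (fun i => by
      rw [hx i, Fin.sum_univ_eq_sum_range (fun j => ((if j = 0 then 1 else φ j) *
        sigG j (y i) (ysub i) (ρ i) (κ i)) • v j) (k + 3 + 1)]
      rw [Finset.sum_range_succ', Finset.sum_range_succ', Finset.sum_range_succ']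
      obtain ⟨c, hc⟩ : ∃ c, κ i = c + 3 := ⟨κ i - 3, by have := hκ i; omega⟩
      have hcr : c ∈ Finset.range (k + 1) := by have := hκ i; simp; omega
      rw [Finset.sum_eq_single_of_mem c hcr]
      · ext t
        simp [sigG, hc]
        ring
      · intro b _ hb
        have : κ i ≠ b + 3 := by omega
        simp [sigG, this])
    Mt M hM
    (fun u => by
      rw [hMq, hPq, ← block_fiber m n hm (fun i => (u ⬝ᵥ x i) ^ 2), mul_inv, mul_comm (m : ℝ)⁻¹,
        mul_assoc]
      refine mul_le_mul_of_nonneg_left ?_ (inv_nonneg.2 hnR.le)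
      rw [Finset.mul_sum]
      refine Finset.sum_le_sum fun l _ => ?_
      rw [block_form m n x xtil hxtil u l]
      have := sq_sum_le_card_mul_sum_sq
        (s := Finset.univ.filter (fun i : Fin (m * n) => i.1 / m = l.1)) (f := fun i => u ⬝ᵥ x i)
      rw [block_card m n hm l] at this
      rw [mul_pow]
      calc _ ≤ (m : ℝ)⁻¹ ^ 2 * (m * ∑ i ∈ Finset.univ.filter
            (fun i : Fin (m * n) => i.1 / m = l.1), (u ⬝ᵥ x i) ^ 2) := by gcongr
        _ = _ := by field_simp)
    (fun u j c hu => by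
      rw [hMq, hPq, ← block_fiber m n hm (fun i => (u ⬝ᵥ x i) ^ 2), mul_inv, mul_comm (m : ℝ)⁻¹,
        mul_assoc]
      congr 1
      rw [Finset.mul_sum]
      refine Finset.sum_congr rfl fun l _ => ?_
      rw [block_form m n x xtil hxtil u l]
      have hbc := block_card m n hm l
      obtain ⟨i₀, hi₀⟩ : (Finset.univ.filter (fun i : Fin (m * n) => i.1 / m = l.1)).Nonempty := by
        rw [← Finset.card_pos]; omega
      simp only [Finset.mem_filter, Finset.mem_univ, true_and] at hi₀
      have hconst : ∀ i ∈ Finset.univ.filter (fun i : Fin (m * n) => i.1 / m = l.1),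
          u ⬝ᵥ x i = u ⬝ᵥ x i₀ := by
        intro i hi
        simp only [Finset.mem_filter, Finset.mem_univ, true_and] at hi
        rw [hu, hu, hsig j.1 i i₀ (hi.trans hi₀.symm)]
      rw [Finset.sum_congr rfl hconst,
        Finset.sum_congr rfl (fun i hi => by rw [hconst i hi] :
          ∀ i ∈ Finset.univ.filter (fun i : Fin (m * n) => i.1 / m = l.1),
          (u ⬝ᵥ x i) ^ 2 = (u ⬝ᵥ x i₀) ^ 2),
        Finset.sum_const, Finset.sum_const, hbc, nsmul_eq_mul, nsmul_eq_mul]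
      field_simp)
    ⟨1, by omega⟩ hp1
    (by
      refine hcount.trans ?_
      rw [← Finset.card_map Fin.valEmbedding, ← Set.ncard_coe_finset]
      refine Set.ncard_le_ncard ?_ (Finset.finite_toSet _)
      have hKR : (((k + 3 : ℕ) : ℝ) - 2) = k + 1 := by push_cast; ring
      intro j hj
      simp only [Set.mem_setOf_eq, hKR] at hj
      simp only [Finset.coe_map, Set.mem_image, Finset.mem_coe, Finset.mem_filter, Finset.mem_univ,
        true_and, Fin.valEmbedding_apply]
      rcases hj with ⟨rfl, h⟩ | ⟨rfl, h⟩ | ⟨h1, h2, h⟩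
      · exact ⟨⟨0, by omega⟩, by simpa using h, rfl⟩
      · exact ⟨⟨2, by omega⟩, by simpa using h, rfl⟩
      · refine ⟨⟨j, by omega⟩, ?_, rfl⟩
        have h3 : ¬ j ≤ 2 := by omega
        have h4 : ¬ j = 0 := by omega
        simp only [h3, h4, if_false]
        rw [div_eq_inv_mul] at h
        simpa using h)
    W hmin
    (fun W₁ h₁ => by
      rw [hfro, hfro]
      have := hnorm W₁ h₁
      rwa [Real.sqrt_le_sqrt_iff (by positivity)] at this)
  exact hmain
end

section
/- (Deterministic core of Theorem 6.1: the joint loss avoids both class collapse and feature suppression.) In the structured contrastive dataset with μ = 0 and 5 ≤ p ≤ K, assume φ_3 ≥ φ_4 ≥ … ≥ φ_K, φ_2² > φ_{p−2}²/(K−2), and φ_1² < φ_{p−1}²/(K−2). For β ∈ (0,1) define the joint loss L_joint,β(W) = β L_SCL(W) + (1−β) L_UCL(W) for W ∈ ℝ^{p×D}. Then every minimum-norm global minimizer W* of L_joint,β (minimizing the Frobenius norm among global minimizers) satisfies W* v_1 ≠ 0 and W* v_2 ≠ 0; both the class feature and the subclass feature are learned. -/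
open Matrix

lemma aux_joint {p D : ℕ} (P Q M : Matrix (Fin D) (Fin D) ℝ) (β : ℝ)
    (W : Matrix (Fin p) (Fin D) ℝ) :
    β * CLTraceLoss P M W + (1 - β) * CLTraceLoss Q M W
      = CLTraceLoss (β • P + (1 - β) • Q) M W := by
  simp only [CLTraceLoss, Matrix.trace_add, Matrix.trace_smul, Matrix.mul_add, Matrix.mul_smul,
    smul_add, smul_eq_mul]
  ring

lemma aux_gram {p D : ℕ} (W0 : Matrix (Fin p) (Fin D) ℝ) (a : Fin p → ℝ) (u : Fin D → ℝ)
    (h0 : a ᵥ* W0 = 0) (ha : a ⬝ᵥ a = 1) :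
    (W0 + vecMulVec a u)ᵀ * (W0 + vecMulVec a u) = W0ᵀ * W0 + vecMulVec u u := by
  have h1 : W0ᵀ *ᵥ a = 0 := by rw [Matrix.mulVec_transpose]; exact h0
  rw [Matrix.transpose_add, Matrix.add_mul, Matrix.mul_add, Matrix.mul_add,
    Matrix.transpose_vecMulVec, Matrix.mul_vecMulVec, h1, Matrix.vecMulVec_mul, h0,
    Matrix.vecMulVec_mul_vecMulVec, ha]
  simp

lemma aux_tr {D : ℕ} (u : Fin D → ℝ) (B : Matrix (Fin D) (Fin D) ℝ) :
    Matrix.trace (vecMulVec u u * B) = u ⬝ᵥ (B *ᵥ u) := by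
  rw [Matrix.vecMulVec_mul, Matrix.trace_vecMulVec, Matrix.dotProduct_mulVec, dotProduct_comm]

lemma aux_loss_s4 {p D : ℕ} (P M : Matrix (Fin D) (Fin D) ℝ) (hM : Mᵀ = M)
    (W0 : Matrix (Fin p) (Fin D) ℝ) (a : Fin p → ℝ) (u : Fin D → ℝ)
    (h0 : a ᵥ* W0 = 0) (ha : a ⬝ᵥ a = 1) :
    CLTraceLoss P M (W0 + vecMulVec a u) = CLTraceLoss P M W0 - 2 * (u ⬝ᵥ (P *ᵥ u))
      + 2 * ((W0 *ᵥ (M *ᵥ u)) ⬝ᵥ (W0 *ᵥ (M *ᵥ u))) + (u ⬝ᵥ (M *ᵥ u)) ^ 2 := by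
  unfold CLTraceLoss
  rw [aux_gram W0 a u h0 ha]
  set A := W0ᵀ * W0 with hA
  have e1 : Matrix.trace (vecMulVec u u * M * A * M)
      = (W0 *ᵥ (M *ᵥ u)) ⬝ᵥ (W0 *ᵥ (M *ᵥ u)) := by
    rw [Matrix.mul_assoc, Matrix.mul_assoc, aux_tr, hA]
    simp only [← Matrix.mulVec_mulVec]
    rw [Matrix.dotProduct_mulVec, ← Matrix.mulVec_transpose, hM, Matrix.dotProduct_mulVec,
      Matrix.vecMul_transpose]
  have e2 : Matrix.trace (A * M * vecMulVec u u * M)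
      = (W0 *ᵥ (M *ᵥ u)) ⬝ᵥ (W0 *ᵥ (M *ᵥ u)) := by
    rw [← e1, Matrix.mul_assoc (A * M), Matrix.trace_mul_comm, ← Matrix.mul_assoc]
  have e3 : Matrix.trace (vecMulVec u u * M * vecMulVec u u * M) = (u ⬝ᵥ (M *ᵥ u)) ^ 2 := by
    rw [Matrix.mul_assoc, Matrix.mul_assoc, aux_tr]
    rw [← Matrix.mulVec_mulVec, ← Matrix.mulVec_mulVec, Matrix.vecMulVec_mulVec]
    simp [Matrix.mulVec_smul, sq]
  simp only [Matrix.add_mul, Matrix.mul_add, Matrix.trace_add, Matrix.trace_smul, smul_add,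
    smul_eq_mul, e1, e2, e3, aux_tr]
  ring

lemma aux_frob {p D : ℕ} (W : Matrix (Fin p) (Fin D) ℝ) :
    ∑ i, ∑ j, (W i j) ^ 2 = Matrix.trace (Wᵀ * W) := by
  rw [Finset.sum_comm]
  simp [Matrix.trace, Matrix.mul_apply, sq]

/-- replacing the row-direction `a` of `W` by `u`. -/
lemma aux_replace {p D : ℕ} (P M : Matrix (Fin D) (Fin D) ℝ) (hM : Mᵀ = M)
    (W : Matrix (Fin p) (Fin D) ℝ) (a : Fin p → ℝ) (u : Fin D → ℝ) (c : ℝ)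
    (ha : a ⬝ᵥ a = 1) (hu : M *ᵥ u = c • u) (hWu : W *ᵥ u = 0) :
    ∃ W' : Matrix (Fin p) (Fin D) ℝ,
      CLTraceLoss P M W' + ((a ᵥ* W) ⬝ᵥ (M *ᵥ (a ᵥ* W))) ^ 2
          - 2 * ((a ᵥ* W) ⬝ᵥ (P *ᵥ (a ᵥ* W)))
        ≤ CLTraceLoss P M W + (u ⬝ᵥ (M *ᵥ u)) ^ 2 - 2 * (u ⬝ᵥ (P *ᵥ u)) ∧
      ∑ i, ∑ j, (W' i j) ^ 2 = ∑ i, ∑ j, (W i j) ^ 2 - (a ᵥ* W) ⬝ᵥ (a ᵥ* W) + u ⬝ᵥ u := by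
  set w := a ᵥ* W with hw
  set W0 := W - vecMulVec a w with hW0
  have h0 : a ᵥ* W0 = 0 := by
    rw [hW0, Matrix.vecMul_sub, Matrix.vecMul_vecMulVec, ha, ← hw]; simp
  have hW : W = W0 + vecMulVec a w := by rw [hW0]; simp
  have hwu : w ⬝ᵥ u = 0 := by
    rw [hw, ← Matrix.dotProduct_mulVec, hWu]; simp
  have hW0u : W0 *ᵥ u = 0 := by
    rw [hW0, Matrix.sub_mulVec, hWu, Matrix.vecMulVec_mulVec, hwu]; simp
  refine ⟨W0 + vecMulVec a u, ?_, ?_⟩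
  · rw [aux_loss_s4 P M hM W0 a u h0 ha]
    conv_rhs => rw [hW, aux_loss_s4 P M hM W0 a w h0 ha]
    have : 0 ≤ (W0 *ᵥ (M *ᵥ w)) ⬝ᵥ (W0 *ᵥ (M *ᵥ w)) := by
      simp only [dotProduct]; exact Finset.sum_nonneg fun i _ => mul_self_nonneg _
    have h2 : W0 *ᵥ (M *ᵥ u) = 0 := by rw [hu, Matrix.mulVec_smul, hW0u]; simp
    rw [h2]; simp only [dotProduct_zero]; linarith
  · rw [aux_frob, aux_frob, aux_gram W0 a u h0 ha]
    conv_rhs => rw [hW, aux_gram W0 a w h0 ha]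
    simp only [Matrix.trace_add, Matrix.trace_vecMulVec]; ring

/-- a minimum-norm minimiser kills the kernel of `M`. -/
lemma aux_kernel {p D : ℕ} (P M : Matrix (Fin D) (Fin D) ℝ) (hMt : Mᵀ = M) (hPt : Pᵀ = P)
    (W : Matrix (Fin p) (Fin D) ℝ) (u : Fin D → ℝ) (hM : M *ᵥ u = 0) (hP : P *ᵥ u = 0)
    (hmin : ∀ W' : Matrix (Fin p) (Fin D) ℝ, CLTraceLoss P M W ≤ CLTraceLoss P M W')
    (hnorm : ∀ W' : Matrix (Fin p) (Fin D) ℝ,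
      (∀ W'' : Matrix (Fin p) (Fin D) ℝ, CLTraceLoss P M W' ≤ CLTraceLoss P M W'') →
      ∑ i, ∑ j, (W i j) ^ 2 ≤ ∑ i, ∑ j, (W' i j) ^ 2) : W *ᵥ u = 0 := by
  by_cases hu : u = 0
  · simp [hu]
  have huu : 0 < u ⬝ᵥ u := by
    have h1 : 0 ≤ u ⬝ᵥ u := by
      simp only [dotProduct]; exact Finset.sum_nonneg fun i _ => mul_self_nonneg _
    exact lt_of_le_of_ne h1 (fun h => hu (dotProduct_self_eq_zero.mp h.symm))
  set d := u ⬝ᵥ u with hd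
  set b := W *ᵥ u with hb
  set W' := W - d⁻¹ • vecMulVec b u with hW'
  have hvM : u ᵥ* M = 0 := by rw [← Matrix.mulVec_transpose, hMt, hM]
  have hvP : u ᵥ* P = 0 := by rw [← Matrix.mulVec_transpose, hPt, hP]
  have h1 : W' * M = W * M := by
    rw [hW', Matrix.sub_mul, Matrix.smul_mul, Matrix.vecMulVec_mul, hvM]; ext i j; simp [Matrix.vecMulVec_apply]
  have h2 : W' * P = W * P := by
    rw [hW', Matrix.sub_mul, Matrix.smul_mul, Matrix.vecMulVec_mul, hvP]; ext i j; simp [Matrix.vecMulVec_apply]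
  have h3 : P * W'ᵀ = P * Wᵀ := by
    have := congrArg Matrix.transpose h2
    rwa [Matrix.transpose_mul, Matrix.transpose_mul, hPt] at this
  have h4 : M * W'ᵀ = M * Wᵀ := by
    have := congrArg Matrix.transpose h1
    rwa [Matrix.transpose_mul, Matrix.transpose_mul, hMt] at this
  have key : ∀ V : Matrix (Fin p) (Fin D) ℝ, CLTraceLoss P M V
      = -2 * Matrix.trace (V * (P * Vᵀ)) + Matrix.trace ((V * M) * Vᵀ * ((V * M) * Vᵀ)) := by
    intro V
    unfold CLTraceLoss
    rw [Matrix.trace_add, Matrix.trace_smul, smul_eq_mul]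
    congr 1
    · rw [Matrix.mul_assoc Vᵀ, Matrix.trace_mul_comm, Matrix.mul_assoc]
    · rw [show Vᵀ * V * M * (Vᵀ * V) * M = Vᵀ * (V * M * (Vᵀ * V) * M) by
        simp only [Matrix.mul_assoc], Matrix.trace_mul_comm]
      simp only [Matrix.mul_assoc]
  have hloss : CLTraceLoss P M W' = CLTraceLoss P M W := by
    rw [key, key, h1, h3, ← Matrix.mul_assoc W', h2, Matrix.mul_assoc, Matrix.mul_assoc W M, h4]
    simp only [Matrix.mul_assoc]
  have hn := hnorm W' (fun W'' => by rw [hloss]; exact hmin W'')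
  have hfr : ∑ i, ∑ j, (W' i j) ^ 2 = ∑ i, ∑ j, (W i j) ^ 2 - d⁻¹ * (b ⬝ᵥ b) := by
    have : ∀ i, ∑ j, (W' i j) ^ 2 = ∑ j, (W i j) ^ 2 - d⁻¹ * (b i * b i) := by
      intro i
      have e1 : ∀ j, (W' i j) ^ 2 = (W i j) ^ 2 - 2 * d⁻¹ * b i * (W i j * u j)
          + (d⁻¹ * b i) ^ 2 * (u j * u j) := by
        intro j
        simp only [hW', Matrix.sub_apply, Matrix.smul_apply, Matrix.vecMulVec_apply, smul_eq_mul]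
        ring
      simp only [e1, Finset.sum_add_distrib, Finset.sum_sub_distrib, ← Finset.mul_sum]
      have e2 : ∑ j, W i j * u j = b i := rfl
      have e3 : ∑ j, u j * u j = d := rfl
      rw [e2, e3]; field_simp; ring
    simp only [this, Finset.sum_sub_distrib, ← Finset.mul_sum]; rfl
  rw [hfr] at hn
  have hbb : 0 ≤ b ⬝ᵥ b := by
    simp only [dotProduct]; exact Finset.sum_nonneg fun i _ => mul_self_nonneg _
  have : b ⬝ᵥ b = 0 := by
    have h5 : 0 < d⁻¹ := inv_pos.mpr huu
    have h6 : d⁻¹ * (b ⬝ᵥ b) ≤ 0 := by linarith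
    nlinarith
  exact dotProduct_self_eq_zero.mp this

lemma aux_exists {p q : ℕ} (hq : q < p) (h : Fin q → Fin p → ℝ) :
    ∃ a : Fin p → ℝ, a ⬝ᵥ a = 1 ∧ ∀ j, a ⬝ᵥ h j = 0 := by
  have : LinearMap.ker (Matrix.mulVecLin (Matrix.of h)) ≠ ⊥ := by
    apply LinearMap.ker_ne_bot_of_finrank_lt
    simpa using hq
  obtain ⟨b, hb, hb0⟩ := (Submodule.ne_bot_iff _).mp this
  have hbb : 0 < b ⬝ᵥ b := by
    have h1 : 0 ≤ b ⬝ᵥ b := by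
      simp only [dotProduct]; exact Finset.sum_nonneg fun i _ => mul_self_nonneg _
    exact lt_of_le_of_ne h1 (fun h => hb0 (dotProduct_self_eq_zero.mp h.symm))
  refine ⟨(Real.sqrt (b ⬝ᵥ b))⁻¹ • b, ?_, ?_⟩
  · rw [smul_dotProduct, dotProduct_smul, smul_eq_mul, smul_eq_mul, ← mul_assoc, ← mul_inv,
      Real.mul_self_sqrt hbb.le, inv_mul_cancel₀ hbb.ne']
  · intro j
    have := congrFun (LinearMap.mem_ker.mp hb) j
    rw [Matrix.mulVecLin_apply] at this
    have h2 : h j ⬝ᵥ b = 0 := this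
    rw [smul_dotProduct, dotProduct_comm b (h j), h2]; simp

lemma aux_quad {ι : Type*} [Fintype ι] {D : ℕ} (x : ι → Fin D → ℝ) (c : ℝ)
    (w : Fin D → ℝ) :
    w ⬝ᵥ ((c • ∑ i, vecMulVec (x i) (x i)) *ᵥ w) = c * ∑ i, (x i ⬝ᵥ w) ^ 2 := by
  rw [Matrix.smul_mulVec, Matrix.sum_mulVec, dotProduct_smul, dotProduct_sum, smul_eq_mul]
  congr 1
  refine Finset.sum_congr rfl fun i _ => ?_
  rw [Matrix.vecMulVec_mulVec]
  simp [dotProduct_comm w, sq]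

lemma aux_mulVec {ι : Type*} [Fintype ι] {D : ℕ} (x : ι → Fin D → ℝ) (c : ℝ)
    (w : Fin D → ℝ) :
    ((c • ∑ i, vecMulVec (x i) (x i)) *ᵥ w) = c • ∑ i, (x i ⬝ᵥ w) • x i := by
  rw [Matrix.smul_mulVec, Matrix.sum_mulVec]
  congr 1
  refine Finset.sum_congr rfl fun i _ => ?_
  rw [Matrix.vecMulVec_mulVec]
  simp

lemma aux_symm {ι : Type*} [Fintype ι] {D : ℕ} (x : ι → Fin D → ℝ) (c : ℝ) :
    (c • ∑ i, vecMulVec (x i) (x i))ᵀ = c • ∑ i, vecMulVec (x i) (x i) := by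
  simp [Matrix.transpose_sum, Matrix.transpose_vecMulVec]

theorem aux_main {ι : Type*} [Fintype ι] {p D q : ℕ} (x : ι → Fin D → ℝ) (N : ℝ) (hN : 0 < N)
    (M P : Matrix (Fin D) (Fin D) ℝ) (hM : M = N⁻¹ • ∑ i, vecMulVec (x i) (x i))
    (hPt : Pᵀ = P) (y s : ι → ℝ) (β φ1 φ2 L1 L2 L3 : ℝ) (hβ0 : 0 < β) (hβ1 : β < 1)
    (hφ1 : φ1 ≠ 0) (hφ2 : φ2 ≠ 0)
    (hL1 : 0 < L1) (hL3 : 0 < L3) (hL2 : L3 < L2)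
    (hPker : ∀ u, (∀ i, x i ⬝ᵥ u = 0) → P *ᵥ u = 0)
    (hPup : ∀ w, ∑ i, x i ⬝ᵥ w = 0 → ∑ i, y i * (x i ⬝ᵥ w) = 0 →
      w ⬝ᵥ (P *ᵥ w) ≤ (1 - β) * (N⁻¹ * ∑ i, (x i ⬝ᵥ w) ^ 2))
    (hPy : ∀ w c, (∀ i, x i ⬝ᵥ w = c * y i) → w ⬝ᵥ (P *ᵥ w) = c ^ 2)
    (hPs : ∀ w c, (∀ i, x i ⬝ᵥ w = c * s i) → w ⬝ᵥ (P *ᵥ w) = (1 - β) * c ^ 2)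
    (hyy : ∑ i, y i ^ 2 = N) (hss : ∑ i, s i ^ 2 = N)
    (hxy : ∀ i, x i ⬝ᵥ (∑ j, y j • x j) = L1 * y i)
    (hxs : ∀ i, x i ⬝ᵥ (∑ j, s j • x j) = L2 * s i)
    (v1 v2 : Fin D → ℝ) (hv1 : ∀ i, x i ⬝ᵥ v1 = φ1 * y i) (hv2 : ∀ i, x i ⬝ᵥ v2 = φ2 * s i)
    (hq : q < p) (b : Fin q → ι → ℝ)
    (hb : ∀ z : ι → ℝ, (∀ j, ∑ i, b j i * z i = 0) → ∑ i, z i = 0 ∧ ∑ i, y i * z i = 0)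
    (hb3 : ∀ z : ι → ℝ, (∀ j, ∑ i, b j i * z i = 0) → ∑ i, s i * z i = 0 →
      (∑ i, z i • x i) ⬝ᵥ (∑ i, z i • x i) ≤ L3 * ∑ i, z i ^ 2)
    (W : Matrix (Fin p) (Fin D) ℝ)
    (hmin : ∀ W' : Matrix (Fin p) (Fin D) ℝ, CLTraceLoss P M W ≤ CLTraceLoss P M W')
    (hnorm : ∀ W' : Matrix (Fin p) (Fin D) ℝ,
      (∀ W'' : Matrix (Fin p) (Fin D) ℝ, CLTraceLoss P M W' ≤ CLTraceLoss P M W'') →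
      ∑ i, ∑ j, (W i j) ^ 2 ≤ ∑ i, ∑ j, (W' i j) ^ 2) :
    W *ᵥ v1 ≠ 0 ∧ W *ᵥ v2 ≠ 0 := by
  have hMt : Mᵀ = M := by rw [hM]; exact aux_symm x _
  have hL2' : 0 < L2 := hL3.trans hL2
  have hsumdot : ∀ (c : ι → ℝ) (w : Fin D → ℝ),
      (∑ i, c i • x i) ⬝ᵥ w = ∑ i, c i * (x i ⬝ᵥ w) := by
    intro c w; rw [sum_dotProduct]; simp [smul_dotProduct]
  -- the transfer from `v` to the eigenvector
  have transfer : ∀ (c : ι → ℝ) (L φ0 : ℝ) (v0 : Fin D → ℝ), φ0 ≠ 0 →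
      (∀ i, x i ⬝ᵥ (∑ j, c j • x j) = L * c i) → (∀ i, x i ⬝ᵥ v0 = φ0 * c i) →
      W *ᵥ v0 = 0 → W *ᵥ (∑ j, c j • x j) = 0 := by
    intro c L φ0 v0 hφ0 h1 h2 h3
    have hz : ∀ i, x i ⬝ᵥ (L • v0 - φ0 • ∑ j, c j • x j) = 0 := by
      intro i
      rw [dotProduct_sub, dotProduct_smul, dotProduct_smul, h1, h2]
      simp only [smul_eq_mul]; ring
    have := aux_kernel P M hMt hPt W (L • v0 - φ0 • ∑ j, c j • x j)
      (by rw [hM, aux_mulVec]; simp only [hz]; simp) (hPker _ hz) hmin hnorm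
    rw [Matrix.mulVec_sub, Matrix.mulVec_smul, Matrix.mulVec_smul, h3] at this
    simp only [smul_zero, zero_sub, neg_eq_zero] at this
    exact (smul_eq_zero.mp this).resolve_left hφ0
  have hMeig : ∀ (c : ι → ℝ) (L t : ℝ), (∀ i, x i ⬝ᵥ (∑ j, c j • x j) = L * c i) →
      M *ᵥ (t • ∑ j, c j • x j) = (N⁻¹ * L) • (t • ∑ j, c j • x j) := by
    intro c L t h
    rw [hM, aux_mulVec]
    simp only [dotProduct_smul, h]
    simp only [Finset.smul_sum, smul_smul, smul_eq_mul]
    refine Finset.sum_congr rfl fun i _ => ?_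
    congr 1; ring
  have hMq : ∀ w, w ⬝ᵥ (M *ᵥ w) = N⁻¹ * ∑ i, (x i ⬝ᵥ w) ^ 2 := by
    intro w; rw [hM, aux_quad]
  -- choice of the direction
  obtain ⟨a, ha, hab⟩ := aux_exists hq (fun j => W *ᵥ (∑ i, b j i • x i))
  have hdot : ∀ c : ι → ℝ, ∑ i, c i * (x i ⬝ᵥ (a ᵥ* W)) = a ⬝ᵥ (W *ᵥ (∑ i, c i • x i)) := by
    intro c
    rw [Matrix.dotProduct_mulVec, dotProduct_comm, hsumdot]
  have hbz : ∀ j, ∑ i, b j i * (x i ⬝ᵥ (a ᵥ* W)) = 0 := by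
    intro j; rw [hdot]; exact hab j
  obtain ⟨hz1, hzy⟩ := hb _ hbz
  have hup := hPup (a ᵥ* W) hz1 hzy
  have hMw := hMq (a ᵥ* W)
  set w := a ᵥ* W with hw
  set Q := N⁻¹ * ∑ i, (x i ⬝ᵥ w) ^ 2 with hQ
  constructor
  · intro h
    have hWe := transfer y L1 φ1 v1 hφ1 hxy hv1 h
    have hu : ∀ i, x i ⬝ᵥ (L1⁻¹ • ∑ j, y j • x j) = 1 * y i := by
      intro i; rw [dotProduct_smul, hxy, smul_eq_mul]; field_simp
    obtain ⟨W', h1, -⟩ := aux_replace P M hMt W a (L1⁻¹ • ∑ j, y j • x j) _ ha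
      (hMeig y L1 L1⁻¹ hxy) (by rw [Matrix.mulVec_smul, hWe, smul_zero])
    rw [hPy _ 1 hu, hMq (_ • _), ← hw, hMw] at h1
    simp only [hu, one_mul, hyy] at h1
    rw [inv_mul_cancel₀ hN.ne'] at h1
    have := hmin W'
    nlinarith [sq_nonneg (Q - (1 - β))]
  · intro h
    have hWe := transfer s L2 φ2 v2 hφ2 hxs hv2 h
    have hr : 0 < 1 - β := by linarith
    set r := Real.sqrt (1 - β) with hrdef
    have hrr : r ^ 2 = 1 - β := Real.sq_sqrt hr.le
    have hu : ∀ i, x i ⬝ᵥ ((r * L2⁻¹) • ∑ j, s j • x j) = r * s i := by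
      intro i; rw [dotProduct_smul, hxs, smul_eq_mul]; field_simp
    obtain ⟨W', h1, h2⟩ := aux_replace P M hMt W a ((r * L2⁻¹) • ∑ j, s j • x j) _ ha
      (hMeig s L2 _ hxs) (by rw [Matrix.mulVec_smul, hWe, smul_zero])
    rw [hPs _ r hu, hMq (_ • _), ← hw, hMw] at h1
    simp only [hu, mul_pow, hrr, ← Finset.mul_sum, hss] at h1
    rw [show N⁻¹ ^ 2 * ((1 - β) ^ 2 * N ^ 2) = (1 - β) ^ 2 by field_simp] at h1
    have h3 := hmin W'
    have hQ0 : (Q - (1 - β)) ^ 2 ≤ 0 := by nlinarith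
    have hQ1 : Q = 1 - β := by
      have := pow_eq_zero_iff (two_ne_zero) |>.mp (le_antisymm hQ0 (sq_nonneg _))
      linarith
    have h4 : CLTraceLoss P M W' ≤ CLTraceLoss P M W := by nlinarith
    have h5 := hnorm W' (fun W'' => h4.trans (hmin W''))
    rw [h2, ← hw] at h5
    have huu : ((r * L2⁻¹) • ∑ j, s j • x j) ⬝ᵥ ((r * L2⁻¹) • ∑ j, s j • x j)
        = (1 - β) * N * L2⁻¹ := by
      rw [smul_dotProduct, hsumdot]
      simp only [hu, smul_eq_mul]
      rw [show ∑ i, s i * (r * s i) = r * ∑ i, s i ^ 2 by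
        rw [Finset.mul_sum]; exact Finset.sum_congr rfl fun i _ => by ring]
      rw [hss, ← hrr]; ring
    rw [huu] at h5
    have hsz : ∑ i, s i * (x i ⬝ᵥ w) = 0 := by rw [hw, hdot, hWe]; simp
    have h6 := hb3 _ hbz hsz
    set g := ∑ i, (x i ⬝ᵥ w) • x i with hg
    have hgw : g ⬝ᵥ w = ∑ i, (x i ⬝ᵥ w) ^ 2 := by
      rw [hg, hsumdot]; exact Finset.sum_congr rfl fun i _ => by ring
    have hS : ∑ i, (x i ⬝ᵥ w) ^ 2 = N * (1 - β) := by
      rw [← hQ1, hQ]; field_simp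
    have hcs : (g ⬝ᵥ w) ^ 2 ≤ (g ⬝ᵥ g) * (w ⬝ᵥ w) := by
      simp only [dotProduct]
      have := Finset.sum_mul_sq_le_sq_mul_sq Finset.univ g w
      simpa only [sq (g _), sq (w _)] using this
    rw [hgw, hS] at hcs
    rw [hS] at h6
    have hww : 0 ≤ w ⬝ᵥ w := by
      simp only [dotProduct]; exact Finset.sum_nonneg fun i _ => mul_self_nonneg _
    have hA : 0 < N * (1 - β) := mul_pos hN hr
    have h7 : w ⬝ᵥ w ≤ N * (1 - β) * L2⁻¹ := by linarith
    have h8 : (N * (1 - β)) ^ 2 ≤ L3 * (N * (1 - β)) * (N * (1 - β) * L2⁻¹) :=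
      hcs.trans (mul_le_mul h6 h7 hww (by positivity))
    have h9 : L3 * L2⁻¹ < 1 := by
      rw [← div_eq_mul_inv, div_lt_one hL2']; exact hL2
    have h10 : 0 < (N * (1 - β)) ^ 2 := by positivity
    nlinarith

lemma aux_bal {ι : Type*} [Fintype ι] (K q : ℕ) (y s ρ : ι → ℝ) (κ : ι → ℕ)
    (hy : ∀ i, y i = 1 ∨ y i = -1)
    (hs : ∀ i, s i = 1 ∨ s i = -1)
    (hρ : ∀ i, ρ i = 1 ∨ ρ i = -1)
    (hκ : ∀ i, 3 ≤ κ i ∧ κ i ≤ K)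
    (hbal : ∀ (a b r : ℝ) (c : ℕ), (a = 1 ∨ a = -1) → (b = 1 ∨ b = -1) →
      (r = 1 ∨ r = -1) → 3 ≤ c → c ≤ K →
      Set.ncard {i : ι | y i = a ∧ s i = b ∧ κ i = c ∧ ρ i = r} = q)
    (F : ℝ → ℝ → ℕ → ℝ → ℝ) :
    ∑ i, F (y i) (s i) (κ i) (ρ i) = (q : ℝ) * ∑ c ∈ Finset.Icc 3 K,
      (F 1 1 c 1 + F 1 1 c (-1) + F 1 (-1) c 1 + F 1 (-1) c (-1)
      + F (-1) 1 c 1 + F (-1) 1 c (-1) + F (-1) (-1) c 1 + F (-1) (-1) c (-1)) := by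
  classical
  set pm : Finset ℝ := {1, -1} with hpm
  set T := (Finset.Icc 3 K) ×ˢ (pm ×ˢ (pm ×ˢ pm)) with hT
  have hmaps : ∀ i ∈ (Finset.univ : Finset ι), (κ i, y i, s i, ρ i) ∈ T := by
    intro i _
    simp only [hT, hpm, Finset.mem_product, Finset.mem_Icc, Finset.mem_insert,
      Finset.mem_singleton]
    exact ⟨hκ i, hy i, hs i, hρ i⟩
  rw [← Finset.sum_fiberwise_of_maps_to hmaps]
  have hinner : ∀ t ∈ T, ∑ i ∈ Finset.univ.filter (fun i => (κ i, y i, s i, ρ i) = t),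
      F (y i) (s i) (κ i) (ρ i) = (q : ℝ) * F t.2.1 t.2.2.1 t.1 t.2.2.2 := by
    rintro ⟨c, a, b, r⟩ ht
    simp only [hT, hpm, Finset.mem_product, Finset.mem_Icc, Finset.mem_insert,
      Finset.mem_singleton] at ht
    obtain ⟨⟨h3, h4⟩, ha, hb, hr⟩ := ht
    have hc := hbal a b r c ha hb hr h3 h4
    have hcard : (Finset.univ.filter (fun i => (κ i, y i, s i, ρ i) = (c, a, b, r))).card = q := by
      rw [← hc, ← Set.ncard_coe_finset]
      congr 1
      ext i
      simp only [Finset.coe_filter, Finset.mem_univ, true_and, Set.mem_ofPred_eq, Prod.mk.injEq]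
      tauto
    rw [← hcard, ← nsmul_eq_mul, ← Finset.sum_const]
    refine Finset.sum_congr rfl fun i hi => ?_
    simp only [Finset.mem_filter, Prod.mk.injEq] at hi
    obtain ⟨-, h1, h2, h5, h6⟩ := hi
    rw [h1, h2, h5, h6]
  rw [Finset.sum_congr rfl hinner, ← Finset.mul_sum]
  congr 1
  rw [hT, Finset.sum_product]
  refine Finset.sum_congr rfl fun c _ => ?_
  have h11 : (1 : ℝ) ≠ -1 := by norm_num
  simp only [Finset.sum_product, hpm, Finset.sum_pair h11]
  ring

lemma aux_block (m n : ℕ) (hm : 1 ≤ m) (l : Fin n) :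
    (Finset.univ.filter (fun j : Fin (m * n) => j.1 / m = l.1)).card = m := by
  have hlt : ∀ k : Fin m, l.1 * m + k.1 < m * n := by
    intro k
    have h1 := k.2
    have h2 : (l.1 + 1) * m ≤ n * m := Nat.mul_le_mul_right m l.2
    rw [mul_comm m n]; nlinarith
  have : (Finset.univ.filter (fun j : Fin (m * n) => j.1 / m = l.1))
      = Finset.univ.image (fun k : Fin m => (⟨l.1 * m + k.1, hlt k⟩ : Fin (m * n))) := by
    ext j
    simp only [Finset.mem_filter, Finset.mem_univ, true_and, Finset.mem_image]
    constructor
    · intro h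
      refine ⟨⟨j.1 % m, Nat.mod_lt _ hm⟩, ?_⟩
      ext
      simp only
      rw [← h, mul_comm]; exact Nat.div_add_mod _ _
    · rintro ⟨k, rfl⟩
      simp only
      rw [mul_comm, Nat.mul_add_div (by omega), Nat.div_eq_of_lt k.2]; simp
  rw [this, Finset.card_image_of_injective]
  · simp
  · intro a b h
    simp only [Fin.mk.injEq] at h
    ext; omega

/-- block-averaging: contraction, and identity on block constant vectors -/
lemma aux_blockavg (m n : ℕ) (hm : 1 ≤ m) (z : Fin (m * n) → ℝ) :
    ((n : ℝ)⁻¹ * ∑ l : Fin n, ((m : ℝ)⁻¹ *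
      ∑ i ∈ Finset.univ.filter (fun j : Fin (m * n) => j.1 / m = l.1), z i) ^ 2
      ≤ ((m : ℝ) * n)⁻¹ * ∑ i, z i ^ 2) ∧
    ((∀ i j : Fin (m * n), i.1 / m = j.1 / m → z i = z j) →
    (n : ℝ)⁻¹ * ∑ l : Fin n, ((m : ℝ)⁻¹ *
      ∑ i ∈ Finset.univ.filter (fun j : Fin (m * n) => j.1 / m = l.1), z i) ^ 2
      = ((m : ℝ) * n)⁻¹ * ∑ i, z i ^ 2) := by
  have hm0 : (0 : ℝ) < m := by exact_mod_cast hm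
  have hlt : ∀ i : Fin (m * n), i.1 / m < n := fun i =>
    Nat.div_lt_of_lt_mul i.2
  have hfib : ∑ i, z i ^ 2 = ∑ l : Fin n,
      ∑ i ∈ Finset.univ.filter (fun j : Fin (m * n) => j.1 / m = l.1), z i ^ 2 := by
    rw [← Finset.sum_fiberwise Finset.univ (fun i : Fin (m * n) => (⟨i.1 / m, hlt i⟩ : Fin n))]
    simp only [Fin.ext_iff]
  have hrhs : ((m : ℝ) * n)⁻¹ * ∑ i, z i ^ 2 = (n : ℝ)⁻¹ * ∑ l : Fin n, (m : ℝ)⁻¹ *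
      ∑ i ∈ Finset.univ.filter (fun j : Fin (m * n) => j.1 / m = l.1), z i ^ 2 := by
    rw [hfib, ← Finset.mul_sum, mul_inv]; ring
  rw [hrhs]
  constructor
  · refine mul_le_mul_of_nonneg_left (Finset.sum_le_sum fun l _ => ?_) (by positivity)
    have := sq_sum_le_card_mul_sum_sq
      (s := Finset.univ.filter (fun j : Fin (m * n) => j.1 / m = l.1)) (f := z)
    rw [aux_block m n hm l] at this
    rw [mul_pow]
    calc _ ≤ (m : ℝ)⁻¹ ^ 2 * (m * _) := mul_le_mul_of_nonneg_left this (by positivity)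
      _ = _ := by field_simp
  · intro hz
    congr 1
    refine Finset.sum_congr rfl fun l _ => ?_
    set B := Finset.univ.filter (fun j : Fin (m * n) => j.1 / m = l.1) with hB
    have hcard : B.card = m := aux_block m n hm l
    have h1 : (∑ i ∈ B, z i) ^ 2 = m * ∑ i ∈ B, z i ^ 2 := by
      rw [sq, Finset.sum_mul_sum, Finset.mul_sum]
      refine Finset.sum_congr rfl fun i hi => ?_
      rw [show (m : ℝ) * z i ^ 2 = ∑ _j ∈ B, z i ^ 2 by
        rw [Finset.sum_const, hcard, nsmul_eq_mul]]
      refine Finset.sum_congr rfl fun j hj => ?_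
      simp only [hB, Finset.mem_filter, Finset.mem_univ, true_and] at hi hj
      rw [hz j i (by omega)]; ring
    rw [mul_pow, h1]; field_simp

theorem stmt_4
    (m K n D : ℕ)
    (hm : 1 ≤ m) (hK : 3 ≤ K) (hn : 1 ≤ n) (hdiv : 8 * (K - 2) ∣ n)
    (hD : K + 1 + m * n ≤ D)
    (φ : ℕ → ℝ) (hφ : ∀ j, 1 ≤ j → j ≤ K → 0 < φ j)
    (μ σξ : ℝ) (hσ : 0 < σξ)
    (v : ℕ → Fin D → ℝ)
    (hortho : ∀ i j, i ≤ K + m * n → j ≤ K + m * n →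
      (∑ t, v i t * v j t) = if i = j then (1 : ℝ) else 0)
    (y ysub ρ : Fin (m * n) → ℝ) (κ : Fin (m * n) → ℕ)
    (hy : ∀ i, y i = 1 ∨ y i = -1)
    (hysub : ∀ i, ysub i = 1 ∨ ysub i = -1)
    (hρ : ∀ i, ρ i = 1 ∨ ρ i = -1)
    (hκ : ∀ i, 3 ≤ κ i ∧ κ i ≤ K)
    (hblock : ∀ i j : Fin (m * n), i.1 / m = j.1 / m →
      y i = y j ∧ ysub i = ysub j ∧ κ i = κ j ∧ ρ i = ρ j)
    (hbal : ∀ (a b r : ℝ) (c : ℕ), (a = 1 ∨ a = -1) → (b = 1 ∨ b = -1) →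
      (r = 1 ∨ r = -1) → 3 ≤ c → c ≤ K →
      Set.ncard {i : Fin (m * n) | y i = a ∧ ysub i = b ∧ κ i = c ∧ ρ i = r}
        = m * n / (8 * (K - 2)))
    (x : Fin (m * n) → Fin D → ℝ)
    (hx : ∀ i, x i = fun t => v 0 t + y i * φ 1 * v 1 t + (ysub i * φ 2 + μ) * v 2 t
      + ρ i * φ (κ i) * v (κ i) t + σξ * v (K + 1 + i.1) t)
    (M Mp : Matrix (Fin D) (Fin D) ℝ)
    (hM : M = ((m * n : ℝ))⁻¹ • ∑ i, Matrix.vecMulVec (x i) (x i))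
    (xbar : ℝ → Fin D → ℝ)
    (hxbar : ∀ ε, xbar ε = (2 / (m * n : ℝ)) •
      ∑ i, Set.indicator {j : Fin (m * n) | y j = ε} x i)
    (hMp : Mp = (2 : ℝ)⁻¹ • (Matrix.vecMulVec (xbar 1) (xbar 1)
      + Matrix.vecMulVec (xbar (-1)) (xbar (-1))))
    (xtil : Fin n → Fin D → ℝ)
    (hxtil : ∀ l : Fin n, xtil l = (m : ℝ)⁻¹ •
      ∑ i, Set.indicator {j : Fin (m * n) | j.1 / m = l.1} x i)
    (Mt : Matrix (Fin D) (Fin D) ℝ)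
    (hMt : Mt = (n : ℝ)⁻¹ • ∑ l, Matrix.vecMulVec (xtil l) (xtil l))
    (hμ : μ = 0) (p : ℕ) (hp5 : 5 ≤ p) (hpK : p ≤ K)
    (hmono : ∀ j, 3 ≤ j → j < K → φ (j + 1) ≤ φ j)
    (hφ2 : φ (p - 2) ^ 2 / ((K : ℝ) - 2) < φ 2 ^ 2)
    (hφ1 : φ 1 ^ 2 < φ (p - 1) ^ 2 / ((K : ℝ) - 2)) :
    ∀ β : ℝ, 0 < β → β < 1 →
    ∀ Wstar : Matrix (Fin p) (Fin D) ℝ,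
      (∀ W : Matrix (Fin p) (Fin D) ℝ,
        β * CLTraceLoss Mp M Wstar + (1 - β) * CLTraceLoss Mt M Wstar ≤
        β * CLTraceLoss Mp M W + (1 - β) * CLTraceLoss Mt M W) →
      (∀ W : Matrix (Fin p) (Fin D) ℝ,
        (∀ W' : Matrix (Fin p) (Fin D) ℝ,
          β * CLTraceLoss Mp M W + (1 - β) * CLTraceLoss Mt M W ≤
          β * CLTraceLoss Mp M W' + (1 - β) * CLTraceLoss Mt M W') →
        Real.sqrt (∑ i, ∑ j, (Wstar i j) ^ 2) ≤ Real.sqrt (∑ i, ∑ j, (W i j) ^ 2)) →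
      Wstar.mulVec (v 1) ≠ 0 ∧ Wstar.mulVec (v 2) ≠ 0 := by
  classical
  intro β hβ0 hβ1 W hmin hnorm
  subst hμ
  simp only [add_zero] at hx
  set N : ℝ := (m : ℝ) * n with hNdef
  have hm0 : (0 : ℝ) < m := by exact_mod_cast hm
  have hn0 : (0 : ℝ) < n := by exact_mod_cast hn
  have hN : 0 < N := mul_pos hm0 hn0
  have hy2 : ∀ i, y i ^ 2 = 1 := fun i => by rcases hy i with h | h <;> rw [h] <;> norm_num
  have hs2 : ∀ i, ysub i ^ 2 = 1 := fun i => by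
    rcases hysub i with h | h <;> rw [h] <;> norm_num
  have hρ2 : ∀ i, ρ i ^ 2 = 1 := fun i => by rcases hρ i with h | h <;> rw [h] <;> norm_num
  have hcardN : ∑ _i : Fin (m * n), (1 : ℝ) = N := by simp [hNdef]
  -- balance
  set q := m * n / (8 * (K - 2)) with hq
  have hB := aux_bal K q y ysub ρ κ hy hysub hρ hκ hbal
  have hK2 : ((K - 2 : ℕ) : ℝ) = (K : ℝ) - 2 := by
    rw [Nat.cast_sub (by omega)]; norm_num
  have hK2pos : (0 : ℝ) < (K : ℝ) - 2 := by
    rw [← hK2]; exact_mod_cast (by omega : 0 < K - 2)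
  have hNq : N = 8 * q * ((K : ℝ) - 2) := by
    have := hB (fun _ _ _ _ => 1)
    rw [hcardN] at this
    rw [this, Finset.sum_const, Nat.card_Icc, nsmul_eq_mul,
      show K + 1 - 3 = K - 2 by omega, hK2]
    ring
  have hy0 : ∑ i, y i = 0 := by
    have := hB (fun a _ _ _ => a)
    rw [this]; norm_num
  have hs0 : ∑ i, ysub i = 0 := by
    have := hB (fun _ b _ _ => b)
    rw [this]; norm_num
  have hys : ∑ i, y i * ysub i = 0 := by
    have := hB (fun a b _ _ => a * b)
    rw [this]; norm_num
  have hyr : ∀ c, ∑ i, (if κ i = c then ρ i * y i else 0) = 0 := by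
    intro c
    have := hB (fun a _ k r => if k = c then r * a else 0)
    rw [this]
    rw [Finset.sum_eq_zero, mul_zero]
    intro k _
    split_ifs <;> norm_num
  have hsr : ∀ c, ∑ i, (if κ i = c then ρ i * ysub i else 0) = 0 := by
    intro c
    have := hB (fun _ b k r => if k = c then r * b else 0)
    rw [this]
    rw [Finset.sum_eq_zero, mul_zero]
    intro k _
    split_ifs <;> norm_num
  have hkc : ∀ c, 3 ≤ c → c ≤ K →
      ((Finset.univ.filter (fun i => κ i = c)).card : ℝ) = 8 * q := by
    intro c h3 h4
    have := hB (fun _ _ k _ => if k = c then 1 else 0)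
    rw [Finset.card_filter]
    push_cast
    rw [this]
    have e : ∀ k, ((if k = c then (1 : ℝ) else 0) + (if k = c then 1 else 0)
      + (if k = c then 1 else 0) + (if k = c then 1 else 0) + (if k = c then 1 else 0)
      + (if k = c then 1 else 0) + (if k = c then 1 else 0) + (if k = c then 1 else 0))
      = if k = c then 8 else 0 := by intro k; split_ifs <;> norm_num
    simp only [e]
    rw [Finset.sum_ite_eq' , if_pos (Finset.mem_Icc.mpr ⟨h3, h4⟩)]; ring
  -- Gram structure
  have hv : ∀ a b, a ≤ K + m * n → b ≤ K + m * n → v a ⬝ᵥ v b = if a = b then (1 : ℝ) else 0 :=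
    hortho
  have hx' : ∀ i, x i = v 0 + (y i * φ 1) • v 1 + (ysub i * φ 2) • v 2
      + (ρ i * φ (κ i)) • v (κ i) + σξ • v (K + 1 + i.1) := by
    intro i; rw [hx i]; ext t; simp
  have hxv : ∀ i a, a ≤ K + m * n → x i ⬝ᵥ v a = (if 0 = a then 1 else 0)
      + (y i * φ 1) * (if 1 = a then 1 else 0) + (ysub i * φ 2) * (if 2 = a then 1 else 0)
      + (ρ i * φ (κ i)) * (if κ i = a then 1 else 0)
      + σξ * (if K + 1 + i.1 = a then 1 else 0) := by
    intro i a ha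
    have := i.2
    have := hκ i
    rw [hx' i]
    simp only [add_dotProduct, smul_dotProduct, smul_eq_mul]
    rw [hv 0 a (by omega) ha, hv 1 a (by omega) ha, hv 2 a (by omega) ha,
      hv (κ i) a (by omega) ha, hv (K + 1 + i.1) a (by omega) ha]
  have hxv1 : ∀ i, x i ⬝ᵥ v 1 = φ 1 * y i := by
    intro i
    have := hκ i
    rw [hxv i 1 (by omega), if_neg (by omega), if_pos rfl, if_neg (by omega), if_neg (by omega),
      if_neg (by omega)]; ring
  have hxv2 : ∀ i, x i ⬝ᵥ v 2 = φ 2 * ysub i := by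
    intro i
    have := hκ i
    rw [hxv i 2 (by omega), if_neg (by omega), if_neg (by omega), if_pos rfl, if_neg (by omega),
      if_neg (by omega)]; ring
  have hxv0 : ∀ i, x i ⬝ᵥ v 0 = 1 := by
    intro i
    have := hκ i
    rw [hxv i 0 (by omega), if_pos rfl, if_neg (by omega), if_neg (by omega), if_neg (by omega),
      if_neg (by omega)]; ring
  have hxvc : ∀ i c, 3 ≤ c → c ≤ K →
      x i ⬝ᵥ v c = (ρ i * φ (κ i)) * (if κ i = c then 1 else 0) := by
    intro i c h3 h4
    have := hκ i
    rw [hxv i c (by omega), if_neg (by omega), if_neg (by omega), if_neg (by omega),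
      if_neg (show ¬ (K + 1 + i.1 = c) by omega)]; ring
  have hxvn : ∀ i j : Fin (m * n),
      x i ⬝ᵥ v (K + 1 + j.1) = σξ * (if i = j then 1 else 0) := by
    intro i j
    have := hκ i
    have := j.2
    rw [hxv i _ (by omega), if_neg (by omega), if_neg (by omega), if_neg (by omega),
      if_neg (show ¬ (κ i = K + 1 + j.1) by omega)]
    simp only [Fin.ext_iff, Nat.add_left_cancel_iff]; ring
  have hgram : ∀ i j, x i ⬝ᵥ x j = 1 + φ 1 ^ 2 * y i * y j + φ 2 ^ 2 * ysub i * ysub j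
      + ρ i * φ (κ i) ^ 2 * (if κ j = κ i then ρ j else 0)
      + σξ ^ 2 * (if i = j then 1 else 0) := by
    intro i j
    rw [hx' j]
    simp only [dotProduct_add, dotProduct_smul, smul_eq_mul]
    rw [hxv0, hxv1, hxv2, hxvc i _ (hκ j).1 (hκ j).2, hxvn]
    by_cases h : κ i = κ j
    · rw [h]; simp only [if_true]; ring
    · rw [if_neg h, if_neg (Ne.symm h)]; ring
  have hxE : ∀ (b : Fin (m * n) → ℝ) i, x i ⬝ᵥ (∑ j, b j • x j) = ∑ j, b j
      + φ 1 ^ 2 * y i * ∑ j, y j * b j + φ 2 ^ 2 * ysub i * ∑ j, ysub j * b j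
      + ρ i * φ (κ i) ^ 2 * ∑ j, (if κ j = κ i then ρ j * b j else 0) + σξ ^ 2 * b i := by
    intro b i
    rw [dotProduct_sum]
    simp only [dotProduct_smul, hgram, smul_eq_mul]
    have e : ∀ j, b j * (1 + φ 1 ^ 2 * y i * y j + φ 2 ^ 2 * ysub i * ysub j
      + ρ i * φ (κ i) ^ 2 * (if κ j = κ i then ρ j else 0)
      + σξ ^ 2 * (if i = j then 1 else 0)) = b j + φ 1 ^ 2 * y i * (y j * b j)
      + φ 2 ^ 2 * ysub i * (ysub j * b j)
      + ρ i * φ (κ i) ^ 2 * (if κ j = κ i then ρ j * b j else 0)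
      + σξ ^ 2 * (if i = j then b j else 0) := by
      intro j; split_ifs <;> ring
    simp only [e, Finset.sum_add_distrib, ← Finset.mul_sum]
    simp
  have hyyN : ∑ i, y i ^ 2 = N := by simp only [hy2]; exact hcardN
  have hssN : ∑ i, ysub i ^ 2 = N := by simp only [hs2]; exact hcardN
  -- quadratic forms of Mp and Mt
  have hxbd : ∀ w ε, xbar ε ⬝ᵥ w = 2 / N * ∑ i, (if y i = ε then x i ⬝ᵥ w else 0) := by
    intro w ε
    rw [hxbar, smul_dotProduct, sum_dotProduct, smul_eq_mul]
    congr 1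
    refine Finset.sum_congr rfl fun i _ => ?_
    by_cases h : y i = ε
    · rw [Set.indicator_of_mem (by exact h), if_pos h]
    · rw [Set.indicator_of_notMem (by exact h), if_neg h, zero_dotProduct]
  have hxb1 : ∀ w, xbar 1 ⬝ᵥ w
      = N⁻¹ * (∑ i, x i ⬝ᵥ w + ∑ i, y i * (x i ⬝ᵥ w)) := by
    intro w
    rw [hxbd, ← Finset.sum_add_distrib, div_eq_mul_inv, mul_comm 2, mul_assoc, Finset.mul_sum]
    congr 1
    refine Finset.sum_congr rfl fun i _ => ?_
    rcases hy i with h | h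
    · rw [h, if_pos rfl]; ring
    · rw [h, if_neg (by norm_num)]; ring
  have hxb2 : ∀ w, xbar (-1) ⬝ᵥ w
      = N⁻¹ * (∑ i, x i ⬝ᵥ w - ∑ i, y i * (x i ⬝ᵥ w)) := by
    intro w
    rw [hxbd, ← Finset.sum_sub_distrib, div_eq_mul_inv, mul_comm 2, mul_assoc, Finset.mul_sum]
    congr 1
    refine Finset.sum_congr rfl fun i _ => ?_
    rcases hy i with h | h
    · rw [h, if_neg (by norm_num)]; ring
    · rw [h, if_pos rfl]; ring
  have hMpq : ∀ w, w ⬝ᵥ (Mp *ᵥ w)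
      = (N⁻¹ * ∑ i, x i ⬝ᵥ w) ^ 2 + (N⁻¹ * ∑ i, y i * (x i ⬝ᵥ w)) ^ 2 := by
    intro w
    rw [hMp, Matrix.smul_mulVec, Matrix.add_mulVec, Matrix.vecMulVec_mulVec,
      Matrix.vecMulVec_mulVec, dotProduct_smul, dotProduct_add, hxb1, hxb2]
    simp only [op_smul_eq_smul, dotProduct_smul, smul_eq_mul]
    rw [dotProduct_comm w, dotProduct_comm w, hxb1, hxb2]
    ring
  have hxtd : ∀ w l, xtil l ⬝ᵥ w = (m : ℝ)⁻¹ *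
      ∑ i ∈ Finset.univ.filter (fun j : Fin (m * n) => j.1 / m = l.1), x i ⬝ᵥ w := by
    intro w l
    rw [hxtil, smul_dotProduct, sum_dotProduct, smul_eq_mul, Finset.sum_filter]
    congr 1
    refine Finset.sum_congr rfl fun i _ => ?_
    by_cases h : i.1 / m = l.1
    · rw [Set.indicator_of_mem (by exact h), if_pos h]
    · rw [Set.indicator_of_notMem (by exact h), if_neg h, zero_dotProduct]
  have hMtq : ∀ w, w ⬝ᵥ (Mt *ᵥ w) = (n : ℝ)⁻¹ * ∑ l : Fin n, ((m : ℝ)⁻¹ *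
      ∑ i ∈ Finset.univ.filter (fun j : Fin (m * n) => j.1 / m = l.1), x i ⬝ᵥ w) ^ 2 := by
    intro w
    rw [hMt, aux_quad]; simp only [hxtd]
  have hPq : ∀ w, w ⬝ᵥ ((β • Mp + (1 - β) • Mt) *ᵥ w)
      = β * (w ⬝ᵥ (Mp *ᵥ w)) + (1 - β) * (w ⬝ᵥ (Mt *ᵥ w)) := by
    intro w
    simp only [Matrix.add_mulVec, Matrix.smul_mulVec, dotProduct_add, dotProduct_smul, smul_eq_mul]
  have hβ' : 0 < 1 - β := by linarith
  have hq0 : (0 : ℝ) < 8 * q := by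
    by_contra h
    have : (8 : ℝ) * q * ((K : ℝ) - 2) ≤ 0 :=
      mul_nonpos_of_nonpos_of_nonneg (not_lt.mp h) hK2pos.le
    linarith
  have hφle : ∀ c, p - 2 ≤ c → c ≤ K → φ c ≤ φ (p - 2) := by
    intro c hc
    induction c, hc using Nat.le_induction with
    | base => intro _; exact le_rfl
    | succ c hc ih =>
      intro h
      exact (hmono c (by omega) (by omega)).trans (ih (by omega))
  simp only [aux_joint] at hmin hnorm
  refine aux_main x N hN M (β • Mp + (1 - β) • Mt) hM ?_ y ysub β (φ 1) (φ 2)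
    (N * φ 1 ^ 2 + σξ ^ 2) (N * φ 2 ^ 2 + σξ ^ 2) (φ (p - 2) ^ 2 * (8 * q) + σξ ^ 2)
    hβ0 hβ1 (hφ 1 le_rfl (by omega)).ne' (hφ 2 (by omega) (by omega)).ne'
    (by positivity) (by positivity) ?_ ?_ ?_ ?_ ?_ hyyN hssN ?_ ?_ (v 1) (v 2) hxv1 hxv2
    (q := p - 3) (by omega)
    (fun j i => if j.1 = 0 then 1 else if j.1 = 1 then y i else
      if κ i = j.1 + 1 then ρ i else 0) ?_ ?_ W hmin ?_
  · rw [Matrix.transpose_add, Matrix.transpose_smul, Matrix.transpose_smul, hMt, aux_symm, hMp]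
    simp [Matrix.transpose_vecMulVec]
  · rw [hNq]
    have := (div_lt_iff₀ hK2pos).mp hφ2
    nlinarith
  · intro u hu
    rw [Matrix.add_mulVec, Matrix.smul_mulVec, Matrix.smul_mulVec, hMt, aux_mulVec, hMp,
      Matrix.smul_mulVec, Matrix.add_mulVec, Matrix.vecMulVec_mulVec,
      Matrix.vecMulVec_mulVec, hxb1, hxb2]
    simp only [hxtd, hu]
    simp
  · intro w h1 h2
    rw [hPq, hMpq, h1, h2, hMtq]
    have := (aux_blockavg m n hm (fun i => x i ⬝ᵥ w)).1
    have := mul_le_mul_of_nonneg_left this hβ'.le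
    simp only [mul_zero]
    linarith
  · intro w c hw
    rw [hPq, hMpq, hMtq, (aux_blockavg m n hm (fun i => x i ⬝ᵥ w)).2
      (fun i j hij => by simp only [hw]; rw [(hblock i j hij).1])]
    simp only [hw]
    have e1 : ∑ i, y i * (c * y i) = c * N := by
      rw [← hyyN, Finset.mul_sum]; exact Finset.sum_congr rfl fun i _ => by ring
    rw [e1, ← Finset.mul_sum, hy0]
    simp only [mul_pow]
    rw [← Finset.mul_sum, hyyN, ← hNdef]
    field_simp
    ring
  · intro w c hw
    rw [hPq, hMpq, hMtq, (aux_blockavg m n hm (fun i => x i ⬝ᵥ w)).2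
      (fun i j hij => by simp only [hw]; rw [(hblock i j hij).2.1])]
    simp only [hw]
    have e1 : ∑ i, y i * (c * ysub i) = c * 0 := by
      rw [← hys, Finset.mul_sum]; exact Finset.sum_congr rfl fun i _ => by ring
    rw [e1, ← Finset.mul_sum, hs0]
    simp only [mul_pow]
    rw [← Finset.mul_sum, hssN, ← hNdef]
    field_simp
    ring
  · intro i
    rw [hxE, hy0, hyr]
    have e1 : ∑ j, y j * y j = N := by rw [← hyyN]; simp only [sq]
    have e2 : ∑ j, ysub j * y j = 0 := by rw [← hys]; simp only [mul_comm]
    rw [e1, e2]; ring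
  · intro i
    rw [hxE, hs0, hsr, hys]
    have e1 : ∑ j, ysub j * ysub j = N := by rw [← hssN]; simp only [sq]
    rw [e1]; ring
  · intro z hz
    have h0 := hz ⟨0, by omega⟩
    have h1 := hz ⟨1, by omega⟩
    simp at h0 h1
    exact ⟨h0, h1⟩
  · intro z hz hsz
    have h0 := hz ⟨0, by omega⟩
    have h1 := hz ⟨1, by omega⟩
    simp at h0 h1
    set R : ℕ → ℝ := fun c => ∑ j, (if κ j = c then ρ j * z j else 0) with hR
    have hR0 : ∀ c, 3 ≤ c → c < p - 2 → R c = 0 := by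
      intro c h3 h4
      have := hz ⟨c - 1, by omega⟩
      simp only [show ¬ (c - 1 = 0) by omega, show ¬ (c - 1 = 1) by omega, if_false,
        show c - 1 + 1 = c by omega] at this
      rw [← this, hR]
      refine Finset.sum_congr rfl fun j _ => ?_
      split_ifs <;> simp
    have hRf : ∀ c, R c = ∑ j ∈ Finset.univ.filter (fun j => κ j = c), ρ j * z j := by
      intro c; rw [hR, Finset.sum_filter]
    have hRb : ∀ c, 3 ≤ c → c ≤ K →
        R c ^ 2 ≤ 8 * q * ∑ j ∈ Finset.univ.filter (fun j => κ j = c), z j ^ 2 := by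
      intro c h3 h4
      have := sq_sum_le_card_mul_sum_sq
        (s := Finset.univ.filter (fun j => κ j = c)) (f := fun j => ρ j * z j)
      rw [hkc c h3 h4] at this
      simp only [mul_pow, hρ2, one_mul] at this
      rw [hRf]; exact this
    have hE : (∑ i, z i • x i) ⬝ᵥ (∑ i, z i • x i)
        = ∑ i, z i * ρ i * φ (κ i) ^ 2 * R (κ i) + σξ ^ 2 * ∑ i, z i ^ 2 := by
      rw [sum_dotProduct, Finset.mul_sum, ← Finset.sum_add_distrib]
      refine Finset.sum_congr rfl fun i _ => ?_
      rw [smul_dotProduct, hxE, h0, h1, hsz, smul_eq_mul]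
      ring
    have hmaps : ∀ i ∈ (Finset.univ : Finset (Fin (m * n))), κ i ∈ Finset.Icc 3 K :=
      fun i _ => Finset.mem_Icc.mpr (hκ i)
    rw [hE, add_mul]
    refine add_le_add ?_ le_rfl
    rw [← Finset.sum_fiberwise_of_maps_to hmaps, ← Finset.sum_fiberwise_of_maps_to hmaps,
      Finset.mul_sum]
    refine Finset.sum_le_sum fun c hc => ?_
    obtain ⟨h3, h4⟩ := Finset.mem_Icc.mp hc
    have e1 : ∑ i ∈ Finset.univ.filter (fun j => κ j = c), z i * ρ i * φ (κ i) ^ 2 * R (κ i)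
        = φ c ^ 2 * R c ^ 2 := by
      rw [sq (R c)]
      conv_rhs => rw [hRf c, ← hRf c]
      rw [show φ c ^ 2 * (R c * R c) = (φ c ^ 2 * R c) * R c by ring]
      conv_rhs => rhs; rw [hRf c]
      rw [Finset.mul_sum]
      refine Finset.sum_congr rfl fun i hi => ?_
      rw [(Finset.mem_filter.mp hi).2]; ring
    rw [e1, mul_assoc]
    by_cases hcp : c < p - 2
    · rw [hR0 c h3 hcp]
      have : 0 ≤ ∑ i ∈ Finset.univ.filter (fun j => κ j = c), z i ^ 2 :=
        Finset.sum_nonneg fun i _ => sq_nonneg _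
      have := mul_nonneg (sq_nonneg (φ (p - 2))) (mul_nonneg hq0.le this)
      simpa using this
    · refine mul_le_mul ?_ (hRb c h3 h4) (sq_nonneg _) (sq_nonneg _)
      exact pow_le_pow_left₀ (hφ c (by omega) h4).le (hφle c (by omega) h4) 2
  · intro W' hW'
    have := hnorm W' hW'
    exact (Real.sqrt_le_sqrt_iff (Finset.sum_nonneg fun i _ =>
      Finset.sum_nonneg fun j _ => sq_nonneg _)).mp this
end
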